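/- arXiv:1312.5978 — 2 statements merged into one kernel-verified Lean document; each statement's English description precedes it below -/
import Mathlib

section
/- For every constant δ with 0 < δ < 1 there exists a constant c > 0 and an integer n₀ such that for every n = 2^k ≥ n₀ the following holds with d = ⌊δn⌋ and N = n². For every homogeneous ΣΠΣΠ representation NW_d = Σ_{i=1}^{T} Π_{j=1}^{d_i} Q_{i,j} (each Q_{i,j} homogeneous and Σ_{j=1}^{d_i} deg(Q_{i,j}) = n for every i), the quantity T + Σ_{i=1}^{T} Σ_{j=1}^{d_i} (number of monomials appearing in Q_{i,j}) is at least n^{c·log log n}. (This is the polynomial-identity form of: any homogeneous depth-4 arithmetic circuit computing NW_d has size at least n^{Ω(log log n)}, since the size of such a circuit upper-bounds both its top fan-in and the total number of monomials computed at its bottom layer.) -/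
open MvPolynomial

/-- The Nisan–Wigderson polynomial `NW_d`, a polynomial in the variables
`x_{i,j}`, `i, j ∈ F`, given by `Σ_f Π_i x_{i, f(i)}` where `f` ranges over the
(coefficient vectors of) univariate polynomials of degree at most `d - 1`. -/
noncomputable def NW (F : Type*) [Field F] [Fintype F] (d : ℕ) :
    MvPolynomial (F × F) F :=
  ∑ a : Fin d → F, ∏ i : F, MvPolynomial.X (i, ∑ j : Fin d, a j * i ^ (j : ℕ))

section part1
variable {σ K : Type*} [DecidableEq σ] [Field K]

noncomputable def ind (W : Finset σ) : σ →₀ ℕ := Finsupp.indicator W (fun _ _ => 1)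

lemma ind_apply (W : Finset σ) (v : σ) : ind W v = if v ∈ W then 1 else 0 := by
  unfold ind
  rw [Finsupp.indicator_apply]
  split_ifs <;> rfl

lemma ind_support (W : Finset σ) : (ind W).support = W := by
  ext v
  simp [ind_apply]

lemma ind_inj {W W' : Finset σ} (h : ind W = ind W') : W = W' := by
  rw [← ind_support W, h, ind_support]

lemma ind_degree (W : Finset σ) : (ind W).degree = W.card := by
  rw [Finsupp.degree_apply, ind_support, Finset.card_eq_sum_ones]
  apply Finset.sum_congr rfl
  intro v hv
  simp [ind_apply, hv]

open Classical in
/-- coefficient of the multilinear monomial `W`, with all variables outside `A` killed -/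
noncomputable def ct (A : Finset σ) (p : MvPolynomial σ K) (W : Finset σ) : K :=
  if W ⊆ A then coeff (ind W) p else 0

lemma ct_mul (A : Finset σ) (p q : MvPolynomial σ K) (W : Finset σ) :
    ct A (p * q) W = ∑ X ∈ W.powerset, ct A p X * ct A q (W \ X) := by
  unfold ct
  by_cases hW : W ⊆ A
  · rw [if_pos hW, coeff_mul]
    symm
    apply Finset.sum_bij (fun X _ => (ind X, ind (W \ X)))
    · intro X hX
      rw [Finset.mem_powerset] at hX
      rw [Finset.HasAntidiagonal.mem_antidiagonal]
      ext v
      simp only [Finsupp.add_apply, ind_apply, Finset.mem_sdiff]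
      by_cases h1 : v ∈ X
      · simp [h1, hX h1]
      · simp [h1]
    · intro X _ Y _ h
      exact ind_inj (Prod.ext_iff.1 h).1
    · rintro ⟨x, y⟩ hxy
      rw [Finset.HasAntidiagonal.mem_antidiagonal] at hxy
      have hv : ∀ v, x v + y v = if v ∈ W then 1 else 0 := by
        intro v
        rw [← ind_apply, ← hxy]; rfl
      refine ⟨x.support, ?_, ?_⟩
      · rw [Finset.mem_powerset]
        intro v h
        have := hv v
        rw [Finsupp.mem_support_iff] at h
        by_contra hc
        rw [if_neg hc] at this
        omega
      · refine Prod.ext ?_ ?_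
        · ext v
          have := hv v
          simp only [ind_apply, Finsupp.mem_support_iff]
          split_ifs at * <;> omega
        · ext v
          have := hv v
          simp only [ind_apply, Finset.mem_sdiff, Finsupp.mem_support_iff]
          split_ifs at * <;> grind
    · intro X hX
      rw [Finset.mem_powerset] at hX
      rw [if_pos (hX.trans hW), if_pos (Finset.sdiff_subset.trans hW)]
  · rw [if_neg hW]
    symm
    apply Finset.sum_eq_zero
    intro X hX
    rw [Finset.mem_powerset] at hX
    by_cases h1 : X ⊆ A
    · have : ¬ (W \ X ⊆ A) := by
        intro h2
        apply hW
        rw [← Finset.union_sdiff_of_subset hX]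
        exact Finset.union_subset h1 h2
      rw [if_neg this, mul_zero]
    · rw [if_neg h1, zero_mul]

lemma ct_one {A W : Finset σ} (h : ct A (1 : MvPolynomial σ K) W ≠ 0) : W = ∅ := by
  unfold ct at h
  by_contra hW
  apply h
  split_ifs
  · rw [coeff_one, if_neg]
    intro h0
    apply hW
    rw [← ind_support W, ← h0]; rfl
  · rfl

lemma ct_sum {ι : Type*} (A W : Finset σ) (J : Finset ι) (P : ι → MvPolynomial σ K) :
    ct A (∑ j ∈ J, P j) W = ∑ j ∈ J, ct A (P j) W := by
  unfold ct
  split_ifs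
  · rw [coeff_sum]
  · simp

lemma ct_mul_ne {A W : Finset σ} {p q : MvPolynomial σ K} (h : ct A (p * q) W ≠ 0) :
    ∃ X ⊆ W, ct A p X ≠ 0 ∧ ct A q (W \ X) ≠ 0 := by
  rw [ct_mul] at h
  obtain ⟨X, hX, h1⟩ := Finset.exists_ne_zero_of_sum_ne_zero h
  exact ⟨X, Finset.mem_powerset.1 hX, left_ne_zero_of_mul h1, right_ne_zero_of_mul h1⟩

lemma card_inter_split {X W : Finset σ} (C : Finset σ) (h : X ⊆ W) :
    (W ∩ C).card = (X ∩ C).card + ((W \ X) ∩ C).card := by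
  rw [← Finset.card_union_of_disjoint]
  · congr 1
    ext v
    simp only [Finset.mem_inter, Finset.mem_union, Finset.mem_sdiff]
    have := @h v
    tauto
  · rw [Finset.disjoint_left]
    simp +contextual

lemma ct_prod_lower {ι : Type*} [DecidableEq ι] (J : Finset ι) (P : ι → MvPolynomial σ K)
    (A C : Finset σ) (l : ι → ℕ) 
    (h : ∀ j ∈ J, ∀ X, ct A (P j) X ≠ 0 → l j ≤ (X ∩ C).card) :
    ∀ W, ct A (∏ j ∈ J, P j) W ≠ 0 → ∑ j ∈ J, l j ≤ (W ∩ C).card := by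
  induction J using Finset.induction_on with
  | empty => simp
  | insert a J ha ih =>
    intro W hW
    rw [Finset.prod_insert ha] at hW
    obtain ⟨X, hX, h1, h2⟩ := ct_mul_ne hW
    rw [Finset.sum_insert ha, card_inter_split C hX]
    exact add_le_add (h a (Finset.mem_insert_self _ _) X h1)
      (ih (fun j hj => h j (Finset.mem_insert_of_mem hj)) _ h2)

lemma ct_prod_upper {ι : Type*} [DecidableEq ι] (J : Finset ι) (P : ι → MvPolynomial σ K)
    (A C : Finset σ) (l : ι → ℕ) 
    (h : ∀ j ∈ J, ∀ X, ct A (P j) X ≠ 0 → (X ∩ C).card ≤ l j) :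
    ∀ W, ct A (∏ j ∈ J, P j) W ≠ 0 → (W ∩ C).card ≤ ∑ j ∈ J, l j := by
  induction J using Finset.induction_on with
  | empty =>
    intro W hW
    rw [Finset.prod_empty] at hW
    simp [ct_one hW]
  | insert a J ha ih =>
    intro W hW
    rw [Finset.prod_insert ha] at hW
    obtain ⟨X, hX, h1, h2⟩ := ct_mul_ne hW
    rw [Finset.sum_insert ha, card_inter_split C hX]
    exact add_le_add (h a (Finset.mem_insert_self _ _) X h1)
      (ih (fun j hj => h j (Finset.mem_insert_of_mem hj)) _ h2)

/-- part of `Q` not involving the variables in `Y` -/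
noncomputable def qz (Y : Finset σ) (Q : MvPolynomial σ K) : MvPolynomial σ K :=
  ∑ μ ∈ Q.support with Disjoint μ.support Y, monomial μ (coeff μ Q)

lemma coeff_qz (Y : Finset σ) (Q : MvPolynomial σ K) (μ : σ →₀ ℕ) :
    coeff μ (qz Y Q) = if Disjoint μ.support Y then coeff μ Q else 0 := by
  unfold qz
  rw [coeff_sum]
  simp only [coeff_monomial]
  rw [Finset.sum_ite_eq']
  by_cases h : Disjoint μ.support Y
  · simp [h]
    tauto
  · simp [h]

lemma ct_qz {A Y : Finset σ} {Q : MvPolynomial σ K} {X : Finset σ} (h : ct A (qz Y Q) X ≠ 0) :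
    Disjoint X Y := by
  unfold ct at h
  rw [coeff_qz, ind_support] at h
  by_contra hc
  simp [hc] at h

lemma ct_qp {A Y : Finset σ} {Q : MvPolynomial σ K} {X : Finset σ}
    (h : ct A (Q - qz Y Q) X ≠ 0) : ¬ Disjoint X Y ∧ ct A Q X ≠ 0 := by
  unfold ct at *
  rw [coeff_sub, coeff_qz, ind_support] at h
  by_cases hc : Disjoint X Y
  · simp [hc] at h
  · simp [hc] at h
    refine ⟨hc, ?_⟩
    simp [h]

/-- shifted coefficient vector -/
noncomputable def lam (A Z S α : Finset σ) (p : MvPolynomial σ K) : Finset σ → K :=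
  fun U => if S ⊆ U ∧ U ⊆ Z then ct A p (α ∪ (U \ S)) else 0

lemma lam_sum {ι : Type*} (A Z S α : Finset σ) (J : Finset ι) (P : ι → MvPolynomial σ K) :
    lam A Z S α (∑ j ∈ J, P j) = ∑ j ∈ J, lam A Z S α (P j) := by
  funext U
  rw [Finset.sum_apply]
  unfold lam
  split_ifs
  · rw [ct_sum]
  · simp

lemma lam_mul (A Z Y S α : Finset σ) (hYZ : Disjoint Y Z) (hα : α ⊆ Y)
    (p q : MvPolynomial σ K) (hq : ∀ X, ct A q X ≠ 0 → Disjoint X Y) :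
    lam A Z S α (p * q) = ∑ Γ ∈ Z.powerset with Disjoint Γ S,
      ct A p (α ∪ Γ) • lam A Z (S ∪ Γ) ∅ q := by
  funext U
  rw [Finset.sum_apply]
  unfold lam
  by_cases hU : S ⊆ U ∧ U ⊆ Z
  · rw [if_pos hU, ct_mul]
    have hαZ : Disjoint α Z := Finset.disjoint_of_subset_left hα hYZ
    simp only [Pi.smul_apply, smul_eq_mul, Finset.empty_union]
    symm
    rw [← Finset.sum_filter_add_sum_filter_not _ (fun Γ => Γ ⊆ U), add_comm,
      Finset.sum_eq_zero, zero_add]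
    swap
    · intro Γ hΓ
      simp only [Finset.mem_filter, Finset.mem_powerset] at hΓ
      rw [if_neg, mul_zero]
      intro h
      exact hΓ.2 (Finset.subset_union_right.trans h.1)
    symm
    rw [← Finset.sum_filter_add_sum_filter_not _ (fun X => α ⊆ X), add_comm,
      Finset.sum_eq_zero, zero_add]
    swap
    · intro X hX
      simp only [Finset.mem_filter, Finset.mem_powerset] at hX
      have : ct A q ((α ∪ U \ S) \ X) = 0 := by
        by_contra hc
        have := hq _ hc
        apply hX.2
        intro v hv
        by_contra hvX
        rw [Finset.disjoint_left] at this
        exact this (a := v) (by simp [hv, hvX]) (hα hv)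
      rw [this, mul_zero]
    symm
    apply Finset.sum_bij (fun Γ _ => α ∪ Γ)
    · intro Γ hΓ
      simp only [Finset.mem_filter, Finset.mem_powerset] at hΓ ⊢
      refine ⟨Finset.union_subset_union_right ?_, Finset.subset_union_left⟩
      rw [Finset.subset_sdiff]
      exact ⟨hΓ.2, hΓ.1.2⟩
    · intro Γ hΓ Γ' hΓ' h
      simp only [Finset.mem_filter, Finset.mem_powerset] at hΓ hΓ'
      have h1 : Disjoint α Γ := Finset.disjoint_of_subset_right hΓ.1.1 hαZ
      have h2 : Disjoint α Γ' := Finset.disjoint_of_subset_right hΓ'.1.1 hαZ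
      rw [← Finset.union_sdiff_cancel_left h1, h, Finset.union_sdiff_cancel_left h2]
    · intro X hX
      simp only [Finset.mem_filter, Finset.mem_powerset] at hX
      refine ⟨X \ α, ?_, Finset.union_sdiff_of_subset hX.2⟩
      simp only [Finset.mem_filter, Finset.mem_powerset]
      have h1 : X \ α ⊆ U \ S := by
        intro v hv
        rw [Finset.mem_sdiff] at hv
        have := hX.1 hv.1
        rw [Finset.mem_union] at this
        tauto
      rw [Finset.subset_sdiff] at h1
      exact ⟨⟨h1.1.trans hU.2, h1.2⟩, h1.1⟩
    · intro Γ hΓ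
      simp only [Finset.mem_filter, Finset.mem_powerset] at hΓ
      have h1 : Disjoint α U := Finset.disjoint_of_subset_right hU.2 hαZ
      rw [if_pos ⟨Finset.union_subset hU.1 hΓ.2, hU.2⟩]
      congr 2
      ext v
      have := @h1
      rw [Finset.disjoint_left] at this
      have := @this v
      simp only [Finset.mem_sdiff, Finset.mem_union]
      tauto
  · rw [if_neg hU]
    symm
    apply Finset.sum_eq_zero
    intro Γ hΓ
    simp only [Pi.smul_apply, smul_eq_mul]
    rw [if_neg, mul_zero]
    intro h
    exact hU ⟨Finset.subset_union_left.trans h.1, h.2⟩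

/-- index set for the shifts in the upper bound -/
def shf (Z : Finset σ) (lo hi : ℕ) : Finset (Finset σ) :=
  Z.powerset.filter (fun U => lo ≤ U.card ∧ U.card ≤ hi)

lemma lam_prod_mem [DecidableEq (Finset σ → K)] {ι : Type*} [DecidableEq ι] [Fintype ι] (A Z Y S α : Finset σ)
    (hYZ : Disjoint Y Z) (hα : α ⊆ Y) (hS : S ⊆ Z) (s : ℕ)
    (Q : ι → MvPolynomial σ K) (deg : ι → ℕ)
    (hdeg : ∀ j X, ct A (Q j) X ≠ 0 → X.card = deg j)
    (hs : ∀ j X, ct A (Q j) X ≠ 0 → X.card ≤ s) :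
    lam A Z S α (∏ j, Q j) ∈ Submodule.span K
      (((Finset.univ.filter (fun j => deg j ≠ 0)).powerset ×ˢ
        shf Z S.card (S.card + s * α.card)).image
        (fun x : Finset ι × Finset σ => lam A Z x.2 ∅ (∏ j ∈ Finset.univ \ x.1, qz Y (Q j))) :
        Set (Finset σ → K)) := by
  have h0 : ∏ j, Q j = ∑ J0 ∈ Finset.univ.powerset,
      (∏ j ∈ J0, (Q j - qz Y (Q j))) * ∏ j ∈ Finset.univ \ J0, qz Y (Q j) := by
    rw [← Finset.prod_add]
    simp
  rw [h0, lam_sum]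
  apply Submodule.sum_mem
  intro J0 _
  rw [lam_mul A Z Y S α hYZ hα]
  · apply Submodule.sum_mem
    intro Γ hΓ
    simp only [Finset.mem_filter, Finset.mem_powerset] at hΓ
    by_cases hc : ct A (∏ j ∈ J0, (Q j - qz Y (Q j))) (α ∪ Γ) = 0
    · rw [hc, zero_smul]
      exact Submodule.zero_mem _
    apply Submodule.smul_mem
    apply Submodule.subset_span
    have hαY : (α ∪ Γ) ∩ Y = α := by
      ext v
      simp only [Finset.mem_inter, Finset.mem_union]
      constructor
      · rintro ⟨h1 | h1, h2⟩
        · exact h1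
        · exact absurd (hΓ.1 h1) (Finset.disjoint_left.1 hYZ h2)
      · intro h
        exact ⟨Or.inl h, hα h⟩
    have hJ0 : ∀ j ∈ J0, deg j ≠ 0 := by
      intro j hj hd
      have := ct_prod_lower J0 _ A Y (fun i => if i = j then α.card + 1 else 0) (by
        intro i hi X hX
        split_ifs with hij
        · exfalso
          subst hij
          have h1 := ct_qp hX
          have h2 := hdeg _ _ h1.2
          rw [hd, Finset.card_eq_zero] at h2
          subst h2
          simp at h1
        · simp) _ hc
      rw [Finset.sum_ite_eq', if_pos hj, hαY] at this
      omega
    have hJc : J0.card ≤ α.card := by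
      have := ct_prod_lower J0 _ A Y (fun _ => 1) (by
        intro i hi X hX
        have h1 := (ct_qp hX).1
        rw [Finset.disjoint_iff_inter_eq_empty, ← ne_eq, ← Finset.nonempty_iff_ne_empty] at h1
        exact Finset.card_pos.2 h1) _ hc
      rw [hαY] at this
      simpa using this
    have hΓc : Γ.card ≤ s * α.card := by
      have := ct_prod_upper J0 _ A (α ∪ Γ) (fun _ => s) (by
        intro i hi X hX
        exact (Finset.card_le_card Finset.inter_subset_left).trans (hs _ _ (ct_qp hX).2)) _ hc
      rw [Finset.inter_self, Finset.sum_const, smul_eq_mul] at this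
      calc Γ.card ≤ (α ∪ Γ).card := Finset.card_le_card Finset.subset_union_right
        _ ≤ _ := this
        _ ≤ α.card * s := Nat.mul_le_mul_right _ hJc
        _ = _ := mul_comm _ _
    rw [Finset.mem_coe, Finset.mem_image]
    refine ⟨(J0, S ∪ Γ), ?_, rfl⟩
    rw [Finset.mem_product]
    constructor
    · rw [Finset.mem_powerset]
      intro j hj
      simp [hJ0 j hj]
    · unfold shf
      simp only [Finset.mem_filter, Finset.mem_powerset]
      rw [Finset.card_union_of_disjoint hΓ.2.symm]
      exact ⟨Finset.union_subset hS hΓ.1, by omega, by omega⟩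
  · intro X hX
    have := ct_prod_upper (Finset.univ \ J0) _ A Y (fun _ => 0) (by
      intro i hi X hX
      have := ct_qz hX
      rw [Finset.disjoint_iff_inter_eq_empty] at this
      simp [this]) _ hX
    rw [Finset.sum_const_zero, Nat.le_zero, Finset.card_eq_zero] at this
    rwa [Finset.disjoint_iff_inter_eq_empty]

lemma card_filter_deg {ι : Type*} [Fintype ι] (deg : ι → ℕ) :
    (Finset.univ.filter (fun j => deg j ≠ 0)).card ≤ ∑ j, deg j := by
  rw [Finset.card_eq_sum_ones]
  calc _ ≤ ∑ j ∈ Finset.univ.filter (fun j => deg j ≠ 0), deg j := by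
        apply Finset.sum_le_sum
        intro j hj
        simp at hj
        omega
    _ ≤ _ := Finset.sum_le_sum_of_subset (Finset.filter_subset _ _)

/-- Independent family of shifted coefficient vectors is small. -/
lemma upper_bound {T : ℕ} (dd : Fin T → ℕ) (Q : (i : Fin T) → Fin (dd i) → MvPolynomial σ K)
    (deg : (i : Fin T) → Fin (dd i) → ℕ) (n s r ℓ : ℕ) (A Z Y : Finset σ) (hYZ : Disjoint Y Z)
    (hdeg : ∀ i j X, ct A (Q i j) X ≠ 0 → X.card = deg i j)
    (hs : ∀ i j X, ct A (Q i j) X ≠ 0 → X.card ≤ s)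
    (hsum : ∀ i, ∑ j, deg i j = n) (p : MvPolynomial σ K) (hp : p = ∑ i, ∏ j, Q i j)
    {υ : Type*} [Fintype υ] (S α : υ → Finset σ) (hα : ∀ u, α u ⊆ Y) (hS : ∀ u, S u ⊆ Z)
    (hαr : ∀ u, (α u).card = r) (hSl : ∀ u, (S u).card = ℓ)
    (hli : LinearIndependent K (fun u => lam A Z (S u) (α u) p)) :
    Fintype.card υ ≤ T * (2 ^ n * (shf Z ℓ (ℓ + s * r)).card) := by
  classical
  let W : Finset (Finset σ → K) := Finset.univ.biUnion (fun i : Fin T =>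
    ((Finset.univ.filter (fun j => deg i j ≠ 0)).powerset ×ˢ
        shf Z ℓ (ℓ + s * r)).image
        (fun x : Finset (Fin (dd i)) × Finset σ =>
          lam A Z x.2 ∅ (∏ j ∈ Finset.univ \ x.1, qz Y (Q i j))))
  have hmem : ∀ u, lam A Z (S u) (α u) p ∈ Submodule.span K (W : Set (Finset σ → K)) := by
    intro u
    rw [hp, lam_sum]
    apply Submodule.sum_mem
    intro i _
    have := lam_prod_mem A Z Y (S u) (α u) hYZ (hα u) (hS u) s (Q i) (deg i) (hdeg i) (hs i)
    rw [hαr, hSl] at this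
    refine Submodule.span_mono ?_ this
    rw [Finset.coe_subset]
    exact Finset.subset_biUnion_of_mem (fun i : Fin T =>
    ((Finset.univ.filter (fun j => deg i j ≠ 0)).powerset ×ˢ
        shf Z ℓ (ℓ + s * r)).image
        (fun x : Finset (Fin (dd i)) × Finset σ =>
          lam A Z x.2 ∅ (∏ j ∈ Finset.univ \ x.1, qz Y (Q i j)))) (Finset.mem_univ i)
  have hli2 : LinearIndependent K (fun u =>
      (⟨lam A Z (S u) (α u) p, hmem u⟩ : Submodule.span K (W : Set (Finset σ → K)))) := by
    apply LinearIndependent.of_comp (Submodule.subtype _)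
    exact hli
  have h1 := hli2.fintype_card_le_finrank
  refine h1.trans ((finrank_span_finset_le_card W).trans ?_)
  refine Finset.card_biUnion_le.trans ?_
  calc _ ≤ ∑ i : Fin T, 2 ^ n * (shf Z ℓ (ℓ + s * r)).card := by
        apply Finset.sum_le_sum
        intro i _
        refine Finset.card_image_le.trans ?_
        rw [Finset.card_product, Finset.card_powerset]
        apply Nat.mul_le_mul_right
        apply Nat.pow_le_pow_right (by norm_num)
        rw [← hsum i]
        exact card_filter_deg _
    _ = _ := by simp

end part1

section part2
variable {σ K : Type*} [DecidableEq σ] [Fintype σ] [Field K]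

lemma exists_weight (σ : Type*) [DecidableEq σ] [Fintype σ] :
    ∃ w : σ → ℕ, ∀ X X' : Finset σ, ∑ v ∈ X, w v = ∑ v ∈ X', w v → X = X' := by
  let e : σ ↪ ℕ := (Fintype.equivFin σ).toEmbedding.trans Fin.valEmbedding
  refine ⟨fun v => 2 ^ (e v), ?_⟩
  intro X X' h
  apply Finset.map_injective e
  apply Finset.geomSum_injective (le_refl 2)
  simpa [Finset.sum_map] using h

lemma lower_li (p : MvPolynomial σ K) (A Y Z : Finset σ) (hYZ : Disjoint Y Z)
    (E : Finset (Finset σ)) (hEYZ : ∀ G ∈ E, G ⊆ Y ∪ Z)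
    (hp1 : ∀ W, ct A p W ≠ 0 → W ∈ E) (hp2 : ∀ W ∈ E, ct A p W ≠ 0) :
    ∃ sel ⊆ E, sel.card = (E.image (fun G => G ∩ Y)).card ∧
      ∀ UU : Finset (Finset σ), (∀ U ∈ UU, U ⊆ Z ∧ ∃ G ∈ sel, G ∩ Z ⊆ U) →
        ∃ G : UU → Finset σ, (∀ u, G u ∈ sel ∧ G u ∩ Z ⊆ u.1) ∧
          LinearIndependent K (fun u : UU => lam A Z (u.1 \ (G u ∩ Z)) (G u ∩ Y) p) := by
  classical
  obtain ⟨w, hw⟩ := exists_weight σ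
  have hex : ∀ α ∈ E.image (fun G => G ∩ Y), ∃ G ∈ E, G ∩ Y = α ∧
      ∀ G' ∈ E, G' ∩ Y = α → ∑ v ∈ G' ∩ Z, w v ≤ ∑ v ∈ G ∩ Z, w v := by
    intro α hα
    rw [Finset.mem_image] at hα
    obtain ⟨G0, hG0, h0⟩ := hα
    obtain ⟨G, hG, hmax⟩ := Finset.exists_max_image (E.filter (fun G => G ∩ Y = α))
      (fun G => ∑ v ∈ G ∩ Z, w v) ⟨G0, by simp [hG0, h0]⟩
    rw [Finset.mem_filter] at hG
    refine ⟨G, hG.1, hG.2, ?_⟩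
    intro G' h1 h2
    exact hmax G' (by simp [h1, h2])
  choose! g hg1 hg2 hg3 using hex
  refine ⟨(E.image (fun G => G ∩ Y)).image g, ?_, ?_, ?_⟩
  · intro G hG
    rw [Finset.mem_image] at hG
    obtain ⟨α, hα, rfl⟩ := hG
    exact hg1 α hα
  · apply Finset.card_image_of_injOn
    intro α hα β hβ h
    rw [← hg2 α hα, ← hg2 β hβ]
    exact congrArg (fun G => G ∩ Y) h
  · intro UU hUU
    have : ∀ u : UU, ∃ G ∈ (E.image (fun G => G ∩ Y)).image g, G ∩ Z ⊆ u.1 :=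
      fun u => (hUU u.1 u.2).2
    choose G hG1 hG2 using this
    refine ⟨G, fun u => ⟨hG1 u, hG2 u⟩, ?_⟩
    have hGE : ∀ u, G u ∈ E := by
      intro u
      obtain ⟨α, hα, h⟩ := Finset.mem_image.1 (hG1 u)
      rw [← h]; exact hg1 α hα
    have hGmax : ∀ u, ∀ G' ∈ E, G' ∩ Y = G u ∩ Y →
        ∑ v ∈ G' ∩ Z, w v ≤ ∑ v ∈ G u ∩ Z, w v := by
      intro u G' h1 h2
      obtain ⟨α, hα, h⟩ := Finset.mem_image.1 (hG1 u)
      rw [← h] at h2 ⊢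
      exact hg3 α hα G' h1 (by rw [h2, hg2 α hα])
    have hdiag : ∀ u : UU, lam A Z (u.1 \ (G u ∩ Z)) (G u ∩ Y) p u.1 ≠ 0 := by
      intro u
      unfold lam
      rw [if_pos ⟨Finset.sdiff_subset, (hUU u.1 u.2).1⟩, Finset.sdiff_sdiff_eq_self (hG2 u),
        ← Finset.inter_union_distrib_left, Finset.inter_eq_left.2 (hEYZ _ (hGE u))]
      exact hp2 _ (hGE u)
    have htri : ∀ (u : UU) (U' : Finset σ), lam A Z (u.1 \ (G u ∩ Z)) (G u ∩ Y) p U' ≠ 0 →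
        ∑ v ∈ U', w v ≤ ∑ v ∈ u.1, w v := by
      intro u U' h
      unfold lam at h
      split_ifs at h with hc
      swap
      · exact absurd rfl h
      have hE := hp1 _ h
      set S := u.1 \ (G u ∩ Z) with hS
      have h1 : (G u ∩ Y ∪ U' \ S) ∩ Y = G u ∩ Y := by
        ext v
        have := @hc.2 v
        have h3 := fun hv : v ∈ Y => Finset.disjoint_left.1 hYZ hv
        simp only [Finset.mem_inter, Finset.mem_union, Finset.mem_sdiff]
        tauto
      have h2 : (G u ∩ Y ∪ U' \ S) ∩ Z = U' \ S := by
        ext v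
        have := @hc.2 v
        have h3 := fun hv : v ∈ Y => Finset.disjoint_left.1 hYZ hv
        simp only [Finset.mem_inter, Finset.mem_union, Finset.mem_sdiff]
        tauto
      have h3 := hGmax u _ hE h1
      rw [h2] at h3
      rw [← Finset.sum_sdiff hc.1, ← Finset.sum_sdiff (hG2 u)]
      rw [hS] at h3 ⊢
      omega
    rw [Fintype.linearIndependent_iff]
    intro c hc
    by_contra hne
    push Not at hne
    obtain ⟨u0, hu0⟩ := hne
    obtain ⟨u, hu, hmax⟩ := Finset.exists_max_image (Finset.univ.filter (fun u => c u ≠ 0))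
      (fun u : UU => ∑ v ∈ u.1, w v) ⟨u0, by simp [hu0]⟩
    have hcu := congrFun hc u.1
    rw [Finset.sum_apply, Finset.sum_eq_single u] at hcu
    · simp only [Pi.smul_apply, smul_eq_mul, Pi.zero_apply, mul_eq_zero] at hcu
      rw [Finset.mem_filter] at hu
      rcases hcu with h | h
      · exact hu.2 h
      · exact hdiag u h
    · intro u' _ hne
      simp only [Pi.smul_apply, smul_eq_mul, mul_eq_zero]
      by_contra hcon
      push Not at hcon
      have h1 := hmax u' (by simp [hcon.1])
      have h2 := htri u' u.1 hcon.2
      apply hne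
      apply Subtype.ext
      exact hw _ _ (le_antisymm h1 h2)
    · simp

end part2

section part3
variable {σ : Type*} [DecidableEq σ]

lemma card_superset (Z J : Finset σ) (L : ℕ) (hJ : J ⊆ Z) (hL : J.card ≤ L) :
    ((Z.powersetCard L).filter (fun U => J ⊆ U)).card
      = (Z.card - J.card).choose (L - J.card) := by
  rw [← Finset.card_sdiff_of_subset hJ, ← Finset.card_powersetCard]
  apply Finset.card_bij (fun U _ => U \ J)
  · intro U hU
    simp only [Finset.mem_filter, Finset.mem_powersetCard] at hU ⊢
    refine ⟨Finset.sdiff_subset_sdiff hU.1.1 le_rfl, ?_⟩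
    rw [Finset.card_sdiff_of_subset hU.2, hU.1.2]
  · intro U hU U' hU' h
    simp only [Finset.mem_filter, Finset.mem_powersetCard] at hU hU'
    rw [← Finset.union_sdiff_of_subset hU.2, h, Finset.union_sdiff_of_subset hU'.2]
  · intro X hX
    simp only [Finset.mem_powersetCard] at hX
    rw [Finset.subset_sdiff] at hX
    refine ⟨X ∪ J, ?_, ?_⟩
    · simp only [Finset.mem_filter, Finset.mem_powersetCard]
      refine ⟨⟨Finset.union_subset hX.1.1 hJ, ?_⟩, Finset.subset_union_right⟩
      rw [Finset.card_union_of_disjoint hX.1.2, hX.2]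
      omega
    · exact Finset.union_sdiff_cancel_right hX.1.2

lemma choose_step (V L q j : ℕ) (hq : L * q = V) (hq1 : 1 ≤ q) (hj : j < L) :
    q * (V - (j + 1)).choose (L - (j + 1)) ≤ (V - j).choose (L - j) := by
  have hLV : L ≤ V := by nlinarith
  obtain ⟨a, ha⟩ : ∃ a, L - j = a + 1 := ⟨L - j - 1, by omega⟩
  obtain ⟨b, hb⟩ : ∃ b, V - j = b + 1 := ⟨V - j - 1, by omega⟩
  have h1 : L - (j + 1) = a := by omega
  have h2 : V - (j + 1) = b := by omega
  rw [h1, h2, ha, hb]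
  have h3 := Nat.add_one_mul_choose_eq b a
  have h4 : q * (a + 1) ≤ b + 1 := by
    have e1 : L = a + 1 + j := by omega
    have e2 : V = b + 1 + j := by omega
    rw [e1, e2] at hq
    nlinarith
  have h5 : (q * b.choose a) * (a + 1) ≤ (b + 1).choose (a + 1) * (a + 1) := by
    rw [← h3]
    calc q * b.choose a * (a + 1) = (q * (a + 1)) * b.choose a := by ring
      _ ≤ _ := Nat.mul_le_mul_right _ h4
  exact Nat.le_of_mul_le_mul_right h5 (by omega)

lemma choose_steps (V L q i : ℕ) (hq : L * q = V) (hq1 : 1 ≤ q) :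
    ∀ t, i + t ≤ L → q ^ t * (V - (i + t)).choose (L - (i + t)) ≤ (V - i).choose (L - i) := by
  intro t
  induction t with
  | zero => simp
  | succ t ih =>
    intro h
    refine le_trans ?_ (ih (by omega))
    rw [pow_succ, mul_assoc]
    apply Nat.mul_le_mul_left
    exact choose_step V L q (i + t) hq hq1 (by omega)

lemma choose_anti (V L q i j : ℕ) (hq : L * q = V) (hq1 : 1 ≤ q) (hij : i ≤ j) (hj : j ≤ L) :
    (V - j).choose (L - j) ≤ (V - i).choose (L - i) := by
  obtain ⟨t, rfl⟩ := Nat.exists_eq_add_of_le hij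
  refine le_trans ?_ (choose_steps V L q i hq hq1 t hj)
  exact Nat.le_mul_of_pos_left _ (by positivity)

lemma count_lower {τ : Type*} [DecidableEq τ] (B : Finset τ) (mon : τ → Finset σ) (Z : Finset σ)
    (m d L q : ℕ) (hsub : ∀ g ∈ B, mon g ⊆ Z) (hm : ∀ g ∈ B, (mon g).card = m)
    (hinter : ∀ g ∈ B, ∀ g' ∈ B, g ≠ g' → (mon g ∩ mon g').card ≤ d)
    (hq : L * q = Z.card) (hq1 : 1 ≤ q) (hL : 2 * m ≤ L) (hdm : d ≤ m)
    (hM : q ^ (m - d) ≤ B.card) :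
    q ^ (m - d) * (Z.card - m).choose (L - m) ≤
      2 * ((Z.powersetCard L).filter (fun U => ∃ g ∈ B, mon g ⊆ U)).card := by
  set UU := (Z.powersetCard L).filter (fun U => ∃ g ∈ B, mon g ⊆ U) with hUU
  set M := B.card
  set b := (Z.card - m).choose (L - m) with hb
  set V := Z.card
  set b2 := (V - (m + (m - d))).choose (L - (m + (m - d))) with hb2
  have hbb : q ^ (m - d) * b2 ≤ b := choose_steps V L q m hq hq1 (m - d) (by omega)
  have hbpos : 0 < b := by
    apply Nat.choose_pos
    have : L ≤ V := by nlinarith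
    omega
  let X : Finset σ → ℕ := fun U => (B.filter (fun g => mon g ⊆ U)).card
  have hX : ∀ U, X U = ∑ g ∈ B, if mon g ⊆ U then 1 else 0 := by
    intro U
    simp only [X]
    rw [Finset.card_filter]
  have hcount : ∀ J ⊆ Z, J.card ≤ L → ∑ U ∈ UU, (if J ⊆ U then 1 else 0) ≤
      (V - J.card).choose (L - J.card) := by
    intro J hJ hJL
    rw [← card_superset Z J L hJ hJL, ← Finset.card_filter]
    apply Finset.card_le_card
    intro U hU
    rw [Finset.mem_filter] at hU ⊢
    exact ⟨(Finset.mem_filter.1 hU.1).1, hU.2⟩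
  have hcount2 : ∀ g ∈ B, ∑ U ∈ UU, (if mon g ⊆ U then 1 else 0) = b := by
    intro g hg
    rw [hb, ← hm g hg, ← card_superset Z (mon g) L (hsub g hg) (by rw [hm g hg]; omega),
      ← Finset.card_filter]
    congr 1
    ext U
    simp only [hUU, Finset.mem_filter]
    constructor
    · rintro ⟨⟨h1, _⟩, h2⟩; exact ⟨h1, h2⟩
    · rintro ⟨h1, h2⟩; exact ⟨⟨h1, g, hg, h2⟩, h2⟩
  have h1 : ∑ U ∈ UU, X U = M * b := by
    simp only [hX]
    rw [Finset.sum_comm, Finset.sum_congr rfl hcount2]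
    simp [M]
  have h2 : ∑ U ∈ UU, X U ^ 2 ≤ M * b + M * M * b2 := by
    have : ∀ U, X U ^ 2 = ∑ g ∈ B, ∑ g' ∈ B, if mon g ∪ mon g' ⊆ U then 1 else 0 := by
      intro U
      rw [sq, hX, Finset.sum_mul_sum]
      apply Finset.sum_congr rfl
      intro g _
      apply Finset.sum_congr rfl
      intro g' _
      simp only [Finset.union_subset_iff]
      by_cases h1 : mon g ⊆ U <;> by_cases h2 : mon g' ⊆ U <;> simp [h1, h2]
    simp only [this]
    rw [Finset.sum_comm]
    have h3 : ∀ g ∈ B, ∑ U ∈ UU, ∑ g' ∈ B, (if mon g ∪ mon g' ⊆ U then 1 else 0) ≤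
        b + M * b2 := by
      intro g hg
      rw [Finset.sum_comm]
      have h4 : ∀ g' ∈ B, ∑ U ∈ UU, (if mon g ∪ mon g' ⊆ U then 1 else 0) ≤
          (if g = g' then b else 0) + b2 := by
        intro g' hg'
        split_ifs with hgg
        · subst hgg
          rw [Finset.union_self, hcount2 g hg]
          omega
        · have hu := Finset.card_union_add_card_inter (mon g) (mon g')
          have hi := hinter g hg g' hg' hgg
          rw [hm g hg, hm g' hg'] at hu
          refine (hcount _ (Finset.union_subset (hsub g hg) (hsub g' hg')) (by omega)).trans ?_
          rw [zero_add]
          exact choose_anti V L q _ _ hq hq1 (by omega) (by omega)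
      refine (Finset.sum_le_sum h4).trans ?_
      rw [Finset.sum_add_distrib, Finset.sum_ite_eq, if_pos hg, Finset.sum_const, smul_eq_mul]
    refine (Finset.sum_le_sum h3).trans ?_
    rw [Finset.sum_const, smul_eq_mul]
    apply le_of_eq
    ring
  have h3 : (∑ U ∈ UU, X U) ^ 2 ≤ UU.card * ∑ U ∈ UU, X U ^ 2 := sq_sum_le_card_mul_sum_sq
  rw [h1] at h3
  have hMpos : 0 < M := lt_of_lt_of_le (by positivity) hM
  have h4 : (M * M * b) * (q ^ (m - d) * b) ≤ (M * M * b) * (2 * UU.card) := by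
    calc (M * M * b) * (q ^ (m - d) * b) = q ^ (m - d) * (M * b) ^ 2 := by ring
      _ ≤ q ^ (m - d) * (UU.card * (M * b + M * M * b2)) :=
        Nat.mul_le_mul_left _ (h3.trans (Nat.mul_le_mul_left _ h2))
      _ = UU.card * (M * b * q ^ (m - d) + M * M * (q ^ (m - d) * b2)) := by ring
      _ ≤ UU.card * (M * b * M + M * M * b) := by gcongr
      _ = _ := by ring
  exact Nat.le_of_mul_le_mul_left h4 (by positivity)

lemma shf_card (Z : Finset σ) (ℓ t q : ℕ) (hℓ : 0 < ℓ) (hV : Z.card ≤ 2 * q * ℓ) (hq : 1 ≤ q) :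
    (shf Z ℓ (ℓ + t)).card ≤ (t + 1) * (2 * q) ^ t * Z.card.choose ℓ := by
  have hstep : ∀ i, Z.card.choose (ℓ + i) ≤ (2 * q) ^ i * Z.card.choose ℓ := by
    intro i
    induction i with
    | zero => simp
    | succ i ih =>
      have h1 := Nat.choose_succ_right_eq Z.card (ℓ + i)
      have h2 : Z.card.choose (ℓ + (i + 1)) * ℓ ≤ ((2 * q) ^ (i + 1) * Z.card.choose ℓ) * ℓ := by
        calc Z.card.choose (ℓ + (i + 1)) * ℓ ≤ Z.card.choose (ℓ + i + 1) * (ℓ + i + 1) := by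
              rw [← add_assoc]
              exact Nat.mul_le_mul_left _ (by omega)
          _ = Z.card.choose (ℓ + i) * (Z.card - (ℓ + i)) := h1
          _ ≤ ((2 * q) ^ i * Z.card.choose ℓ) * (2 * q * ℓ) :=
              Nat.mul_le_mul ih (by omega)
          _ = _ := by ring
      exact Nat.le_of_mul_le_mul_right h2 hℓ
  have hsub : shf Z ℓ (ℓ + t) ⊆ (Finset.range (t + 1)).biUnion
      (fun i => Z.powersetCard (ℓ + i)) := by
    intro U hU
    unfold shf at hU
    simp only [Finset.mem_filter, Finset.mem_powerset] at hU
    rw [Finset.mem_biUnion]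
    refine ⟨U.card - ℓ, ?_, ?_⟩
    · rw [Finset.mem_range]; omega
    · rw [Finset.mem_powersetCard]
      exact ⟨hU.1, by omega⟩
  refine (Finset.card_le_card hsub).trans (Finset.card_biUnion_le.trans ?_)
  calc _ ≤ ∑ i ∈ Finset.range (t + 1), (2 * q) ^ t * Z.card.choose ℓ := by
        apply Finset.sum_le_sum
        intro i hi
        rw [Finset.mem_range] at hi
        rw [Finset.card_powersetCard]
        refine (hstep i).trans (Nat.mul_le_mul_right _ ?_)
        exact Nat.pow_le_pow_right (by omega) (by omega)
    _ = _ := by simp [mul_assoc]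

lemma choose_drop (V ℓ : ℕ) : ∀ m, 2 * ℓ + m ≤ V →
    V.choose ℓ ≤ 2 ^ m * (V - m).choose ℓ := by
  intro m
  induction m with
  | zero => simp
  | succ m ih =>
    intro h
    refine (ih (by omega)).trans ?_
    rw [pow_succ, mul_assoc]
    apply Nat.mul_le_mul_left
    obtain ⟨N, hN⟩ : ∃ N, V - m = N + 1 := ⟨V - m - 1, by omega⟩
    have h2 : V - (m + 1) = N := by omega
    rw [hN, h2]
    have h3 := Nat.choose_mul_succ_eq N ℓ
    have h4 : (N + 1).choose ℓ * (N + 1) ≤ (2 * N.choose ℓ) * (N + 1) := by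
      calc (N + 1).choose ℓ * (N + 1) ≤ (N + 1).choose ℓ * (2 * (N + 1 - ℓ)) :=
            Nat.mul_le_mul_left _ (by omega)
        _ = 2 * ((N + 1).choose ℓ * (N + 1 - ℓ)) := by ring
        _ = 2 * (N.choose ℓ * (N + 1)) := by rw [h3]
        _ = _ := by ring
    exact Nat.le_of_mul_le_mul_right h4 (by omega)

end part3

section part4
variable {F : Type*} [Field F] [Fintype F] [DecidableEq F]

def ev {d : ℕ} (a : Fin d → F) (i : F) : F := ∑ j : Fin d, a j * i ^ (j : ℕ)

def gr {d : ℕ} (a : Fin d → F) : Finset (F × F) := Finset.univ.image (fun i => (i, ev a i))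

lemma mem_gr {d : ℕ} (a : Fin d → F) (x : F × F) : x ∈ gr a ↔ ev a x.1 = x.2 := by
  unfold gr
  rw [Finset.mem_image]
  constructor
  · rintro ⟨i, _, rfl⟩; rfl
  · intro h
    exact ⟨x.1, Finset.mem_univ _, by rw [h]⟩

lemma ev_inj_on {d : ℕ} (I : Finset F) (hI : d ≤ I.card) (a b : Fin d → F)
    (h : ∀ i ∈ I, ev a i = ev b i) : a = b := by
  classical
  let pol : (Fin d → F) → Polynomial F := fun a =>
    ∑ j : Fin d, Polynomial.C (a j) * Polynomial.X ^ (j : ℕ)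
  have hdeg : ∀ a, (pol a).degree < I.card := by
    intro a
    refine lt_of_lt_of_le (Polynomial.degree_sum_fin_lt a) ?_
    exact_mod_cast hI
  have hev : ∀ a i, (pol a).eval i = ev a i := by
    intro a i
    simp [pol, ev, Polynomial.eval_finset_sum]
  have heq : pol a = pol b := by
    apply Polynomial.eq_of_degrees_lt_of_eval_finset_eq I (hdeg a) (hdeg b)
    intro i hi
    rw [hev, hev, h i hi]
  funext j
  have hc : ∀ a : Fin d → F, (pol a).coeff j = a j := by
    intro a
    simp only [pol, Polynomial.finset_sum_coeff, Polynomial.coeff_C_mul, Polynomial.coeff_X_pow]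
    rw [Finset.sum_eq_single j]
    · simp
    · intro i _ hij
      rw [if_neg, mul_zero]
      intro h
      exact hij (Fin.ext h.symm)
    · simp
  rw [← hc a, heq, hc]

lemma gr_injective {d : ℕ} (hd : d ≤ Fintype.card F) :
    Function.Injective (gr : (Fin d → F) → Finset (F × F)) := by
  intro a b h
  apply ev_inj_on Finset.univ hd
  intro i _
  have : (i, ev a i) ∈ gr b := by
    rw [← h, mem_gr]
  rw [mem_gr] at this
  exact this.symm

lemma gr_inter_card {d : ℕ} (a b : Fin d → F) (hab : a ≠ b) : (gr a ∩ gr b).card ≤ d := by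
  by_contra hc
  push Not at hc
  apply hab
  apply ev_inj_on ((gr a ∩ gr b).image Prod.fst)
  · rw [Finset.card_image_of_injOn]
    · exact hc.le
    · intro x hx y hy h
      rw [Finset.mem_coe, Finset.mem_inter, mem_gr, mem_gr] at hx hy
      refine Prod.ext h ?_
      rw [← hx.1, ← hy.1, h]
  · intro i hi
    obtain ⟨x, hx, rfl⟩ := Finset.mem_image.1 hi
    rw [Finset.mem_inter, mem_gr, mem_gr] at hx
    rw [hx.1, hx.2]

lemma gr_card_inter {d : ℕ} (a : Fin d → F) (R : Finset F) :
    (gr a ∩ (R ×ˢ Finset.univ)).card = R.card := by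
  have : gr a ∩ (R ×ˢ Finset.univ) = R.image (fun i => (i, ev a i)) := by
    ext x
    rw [Finset.mem_inter, mem_gr, Finset.mem_product, Finset.mem_image]
    constructor
    · rintro ⟨h1, h2, _⟩
      exact ⟨x.1, h2, by rw [h1]⟩
    · rintro ⟨i, hi, rfl⟩
      exact ⟨rfl, hi, Finset.mem_univ _⟩
  rw [this, Finset.card_image_of_injective]
  intro i j h
  exact (Prod.ext_iff.1 h).1

lemma ct_prod_X {d : ℕ} (A W : Finset (F × F)) (a : Fin d → F) :
    ct A (∏ i : F, (MvPolynomial.X (i, ev a i) : MvPolynomial (F × F) F)) W =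
      if W ⊆ A then (if gr a = W then 1 else 0) else 0 := by
  have h1 : (∏ i : F, (MvPolynomial.X (i, ev a i) : MvPolynomial (F × F) F)) =
      monomial (ind (gr a)) 1 := by
    have h2 : ind (gr a) = ∑ i : F, Finsupp.single (i, ev a i) 1 := by
      ext x
      rw [ind_apply, Finsupp.finset_sum_apply]
      simp only [Finsupp.single_apply, mem_gr]
      rw [Finset.sum_eq_single x.1]
      · congr 1
        rw [Prod.ext_iff]
        simp
      · intro i _ hi
        rw [if_neg]
        rintro rfl
        exact hi rfl
      · simp
    rw [h2, MvPolynomial.monomial_sum_one]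
    rfl
  rw [h1]
  unfold ct
  rw [coeff_monomial]
  congr 1
  by_cases h : gr a = W
  · simp [h]
  · rw [if_neg h, if_neg]
    intro h'
    exact h (ind_inj h')

lemma ct_NW {d : ℕ} (A W : Finset (F × F)) (hd : d ≤ Fintype.card F) :
    ct A (NW F d) W ≠ 0 ↔ ∃ a : Fin d → F, gr a = W ∧ W ⊆ A := by
  have h1 : ct A (NW F d) W = ∑ a : Fin d → F,
      if W ⊆ A then (if gr a = W then 1 else 0) else 0 := by
    unfold NW
    rw [ct_sum]
    apply Finset.sum_congr rfl
    intro a _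
    exact ct_prod_X A W a
  rw [h1]
  constructor
  · intro h
    obtain ⟨a, _, ha⟩ := Finset.exists_ne_zero_of_sum_ne_zero h
    refine ⟨a, ?_, ?_⟩
    · by_contra hc
      simp [hc] at ha
    · by_contra hc
      simp [hc] at ha
  · rintro ⟨a, ha, hW⟩
    rw [Finset.sum_eq_single a]
    · simp [ha, hW]
    · intro b _ hb
      rw [if_pos hW, if_neg]
      rintro h
      exact hb (gr_injective hd (h.trans ha.symm))
    · simp

lemma count_through {d : ℕ} (hd : d ≤ Fintype.card F) (S0 : Finset (F × F)) (hS : S0.card ≤ d) :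
    (Finset.univ.filter (fun a : Fin d → F => S0 ⊆ gr a)).card * Fintype.card F ^ S0.card ≤
      Fintype.card F ^ d := by
  classical
  by_cases hne : (Finset.univ.filter (fun a : Fin d → F => S0 ⊆ gr a)) = ∅
  · rw [hne]; simp
  obtain ⟨a, ha⟩ := Finset.nonempty_iff_ne_empty.2 hne
  rw [Finset.mem_filter] at ha
  have hI : (S0.image Prod.fst).card = S0.card := by
    apply Finset.card_image_of_injOn
    intro x hx y hy h
    have hx := ha.2 hx
    have hy := ha.2 hy
    rw [mem_gr] at hx hy
    refine Prod.ext h ?_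
    rw [← hx, ← hy, h]
  obtain ⟨I', hI', hI'c⟩ := Finset.exists_superset_card_eq (s := S0.image Prod.fst) (n := d)
    (by omega) hd
  set J := I' \ S0.image Prod.fst with hJ
  have hJc : J.card = d - S0.card := by
    rw [hJ, Finset.card_sdiff_of_subset hI', hI'c, hI]
  have hle : (Finset.univ.filter (fun a : Fin d → F => S0 ⊆ gr a)).card ≤
      Fintype.card (J → F) := by
    rw [← Finset.card_univ]
    apply Finset.card_le_card_of_injOn (fun a => fun i : J => ev a i.1)
    · intro a _; simp
    · intro a ha b hb h
      rw [Finset.mem_coe, Finset.mem_filter] at ha hb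
      apply ev_inj_on I' hI'c.ge
      intro i hi
      by_cases hiJ : i ∈ J
      · exact congrFun h ⟨i, hiJ⟩
      · have : i ∈ S0.image Prod.fst := by
          by_contra hc
          exact hiJ (by rw [hJ, Finset.mem_sdiff]; exact ⟨hi, hc⟩)
        obtain ⟨x, hx, rfl⟩ := Finset.mem_image.1 this
        have h1 := ha.2 hx
        have h2 := hb.2 hx
        rw [mem_gr] at h1 h2
        rw [h1, h2]
  rw [Fintype.card_fun, Fintype.card_coe, hJc] at hle
  calc _ ≤ Fintype.card F ^ (d - S0.card) * Fintype.card F ^ S0.card :=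
        Nat.mul_le_mul_right _ hle
    _ = _ := by rw [← pow_add]; congr 1; omega

lemma count_h {d D : ℕ} (S : Finset (F × F)) (a : Fin d → F) :
    (Finset.univ.filter (fun h : F × F → Fin D => ∀ x ∈ S, h x = h (x.1, ev a x.1))).card *
      D ^ (S \ gr a).card ≤ D ^ Fintype.card (F × F) := by
  classical
  have hle : (Finset.univ.filter
      (fun h : F × F → Fin D => ∀ x ∈ S, h x = h (x.1, ev a x.1))).card ≤
      Fintype.card (((S \ gr a)ᶜ : Finset (F × F)) → Fin D) := by
    rw [← Finset.card_univ]
    apply Finset.card_le_card_of_injOn (fun h => fun x => h x.1)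
    · intro a _; simp
    · intro h hh h' hh' heq
      rw [Finset.mem_coe, Finset.mem_filter] at hh hh'
      have key : ∀ x ∉ S \ gr a, h x = h' x := by
        intro x hx
        exact congrFun heq ⟨x, Finset.mem_compl.2 hx⟩
      funext x
      by_cases hx : x ∈ S \ gr a
      · rw [Finset.mem_sdiff] at hx
        rw [hh.2 x hx.1, hh'.2 x hx.1]
        apply key
        rw [Finset.mem_sdiff, mem_gr]
        simp
      · exact key x hx
  rw [Fintype.card_fun, Fintype.card_coe, Fintype.card_fin, Finset.card_compl] at hle
  calc _ ≤ D ^ (Fintype.card (F × F) - (S \ gr a).card) * D ^ (S \ gr a).card :=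
        Nat.mul_le_mul_right _ hle
    _ = _ := by
      rw [← pow_add]; congr 1
      have := Finset.card_le_univ (S \ gr a)
      omega

lemma count_bad2 {d D : ℕ} (hd : d ≤ Fintype.card F) (hD : D ≤ Fintype.card F) (hD0 : 0 < D)
    (S : Finset (F × F)) (hS : S.card ≤ d) :
    (Finset.univ.filter (fun o : (Fin d → F) × (F × F → Fin D) =>
      ∀ x ∈ S, o.2 x = o.2 (x.1, ev o.1 x.1))).card * D ^ S.card ≤
      2 ^ S.card * (Fintype.card F ^ d * D ^ Fintype.card (F × F)) := by
  classical
  have h1 : (Finset.univ.filter (fun o : (Fin d → F) × (F × F → Fin D) =>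
      ∀ x ∈ S, o.2 x = o.2 (x.1, ev o.1 x.1))).card = ∑ a : Fin d → F,
      (Finset.univ.filter (fun h : F × F → Fin D => ∀ x ∈ S, h x = h (x.1, ev a x.1))).card := by
    simp only [Finset.card_filter]
    rw [Fintype.sum_prod_type]
  rw [h1, Finset.sum_mul]
  have h2 : ∀ a : Fin d → F, (Finset.univ.filter
      (fun h : F × F → Fin D => ∀ x ∈ S, h x = h (x.1, ev a x.1))).card * D ^ S.card ≤
      D ^ Fintype.card (F × F) *
        ∑ S0 ∈ S.powerset, if S0 ⊆ gr a then D ^ S0.card else 0 := by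
    intro a
    have h3 : D ^ S.card = D ^ (S \ gr a).card * D ^ (S ∩ gr a).card := by
      rw [← pow_add, Finset.card_sdiff_add_card_inter]
    rw [h3, ← mul_assoc]
    apply Nat.mul_le_mul (count_h S a)
    have h4 := Finset.single_le_sum (s := S.powerset)
      (f := fun S0 => if S0 ⊆ gr a then D ^ S0.card else 0) (fun _ _ => Nat.zero_le _)
      (a := S ∩ gr a) (Finset.mem_powerset.2 Finset.inter_subset_left)
    simpa [Finset.inter_subset_right] using h4
  refine (Finset.sum_le_sum (fun a _ => h2 a)).trans ?_
  rw [← Finset.mul_sum, Finset.sum_comm]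
  have h5 : ∀ S0 ∈ S.powerset, (∑ a : Fin d → F, if S0 ⊆ gr a then D ^ S0.card else 0) ≤
      Fintype.card F ^ d := by
    intro S0 hS0
    rw [Finset.mem_powerset] at hS0
    rw [← Finset.sum_filter, Finset.sum_const, smul_eq_mul]
    refine le_trans (Nat.mul_le_mul_left _ (Nat.pow_le_pow_left hD _)) ?_
    exact count_through hd S0 ((Finset.card_le_card hS0).trans hS)
  have h6 := Finset.sum_le_sum h5
  rw [Finset.sum_const, Finset.card_powerset, smul_eq_mul] at h6
  calc _ ≤ D ^ Fintype.card (F × F) * (2 ^ S.card * Fintype.card F ^ d) :=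
        Nat.mul_le_mul_left _ h6
    _ = _ := by ring

def cls {d D : ℕ} (h : F × F → Fin D) (a0 : Fin d → F) : Finset (Fin d → F) :=
  Finset.univ.filter (fun a => ∀ i, h (i, ev a i) = h (i, ev a0 i))

lemma count_bad1 {d D : ℕ} (hD0 : 0 < D) (h : F × F → Fin D) :
    2 * (Finset.univ.filter (fun a0 : Fin d → F =>
      2 * D ^ Fintype.card F * (cls h a0).card < Fintype.card F ^ d)).card ≤
      Fintype.card F ^ d := by
  classical
  set B := (Finset.univ.filter (fun a0 : Fin d → F =>
      2 * D ^ Fintype.card F * (cls h a0).card < Fintype.card F ^ d)) with hB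
  let κ : (Fin d → F) → (F → Fin D) := fun a i => h (i, ev a i)
  have h1 : B.card = ∑ y : F → Fin D, (B.filter (fun a => κ a = y)).card :=
    Finset.card_eq_sum_card_fiberwise (fun a _ => by simp)
  have h2 : ∀ y : F → Fin D, 2 * D ^ Fintype.card F * (B.filter (fun a => κ a = y)).card ≤
      Fintype.card F ^ d := by
    intro y
    by_cases hne : B.filter (fun a => κ a = y) = ∅
    · rw [hne]; simp
    obtain ⟨a, ha⟩ := Finset.nonempty_iff_ne_empty.2 hne
    rw [Finset.mem_filter, hB, Finset.mem_filter] at ha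
    refine le_trans (Nat.mul_le_mul_left _ (Finset.card_le_card ?_)) ha.1.2.le
    intro b hb
    rw [Finset.mem_filter] at hb
    unfold cls
    rw [Finset.mem_filter]
    refine ⟨Finset.mem_univ _, ?_⟩
    intro i
    exact congrFun (hb.2.trans ha.2.symm) i
  have h3 : D ^ Fintype.card F * (2 * B.card) ≤ D ^ Fintype.card F * Fintype.card F ^ d := by
    calc D ^ Fintype.card F * (2 * B.card)
        = ∑ y : F → Fin D, 2 * D ^ Fintype.card F * (B.filter (fun a => κ a = y)).card := by
          rw [h1, ← Finset.mul_sum]; ring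
      _ ≤ ∑ y : F → Fin D, Fintype.card F ^ d := Finset.sum_le_sum (fun y _ => h2 y)
      _ = _ := by simp
  exact Nat.le_of_mul_le_mul_left h3 (by positivity)

lemma exists_good {d D s : ℕ} (hd : d ≤ Fintype.card F) (hD : D ≤ Fintype.card F) (hD0 : 0 < D)
    (hs : s ≤ d) (ms : Finset (Finset (F × F))) (hms : ∀ S ∈ ms, S.card = s)
    (hcard : 2 * ms.card * 2 ^ s < D ^ s) :
    ∃ (a0 : Fin d → F) (h : F × F → Fin D),
      Fintype.card F ^ d ≤ 2 * D ^ Fintype.card F * (cls h a0).card ∧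
      ∀ S ∈ ms, ∃ x ∈ S, h x ≠ h (x.1, ev a0 x.1) := by
  classical
  by_contra hcon
  push Not at hcon
  let O := (Fin d → F) × (F × F → Fin D)
  have hO : Fintype.card O = Fintype.card F ^ d * D ^ Fintype.card (F × F) := by
    simp only [O]
    rw [Fintype.card_prod, Fintype.card_fun, Fintype.card_fun, Fintype.card_fin, Fintype.card_fin]
  let B1 : Finset O := Finset.univ.filter (fun o =>
    2 * D ^ Fintype.card F * (cls o.2 o.1).card < Fintype.card F ^ d)
  let B2 : Finset (F × F) → Finset O := fun S => Finset.univ.filter (fun o =>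
      ∀ x ∈ S, o.2 x = o.2 (x.1, ev o.1 x.1))
  have hcov : (Finset.univ : Finset O) ⊆ B1 ∪ ms.biUnion B2 := by
    intro o _
    rw [Finset.mem_union]
    by_cases h : 2 * D ^ Fintype.card F * (cls o.2 o.1).card < Fintype.card F ^ d
    · left
      simp only [B1, Finset.mem_filter]
      exact ⟨Finset.mem_univ _, h⟩
    · right
      obtain ⟨S, hS, hS2⟩ := hcon o.1 o.2 (not_lt.1 h)
      rw [Finset.mem_biUnion]
      refine ⟨S, hS, ?_⟩
      simp only [B2, Finset.mem_filter]
      exact ⟨Finset.mem_univ _, hS2⟩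
  have h1 : Fintype.card O ≤ B1.card + ∑ S ∈ ms, (B2 S).card := by
    rw [← Finset.card_univ]
    exact (Finset.card_le_card hcov).trans ((Finset.card_union_le _ _).trans
      (Nat.add_le_add_left Finset.card_biUnion_le _))
  have h2 : 2 * B1.card ≤ Fintype.card O := by
    have e1 : B1.card = ∑ h : F × F → Fin D, (Finset.univ.filter (fun a0 : Fin d → F =>
      2 * D ^ Fintype.card F * (cls h a0).card < Fintype.card F ^ d)).card := by
      simp only [B1, Finset.card_filter, O]
      rw [Fintype.sum_prod_type, Finset.sum_comm]
    rw [e1, Finset.mul_sum]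
    refine (Finset.sum_le_sum (fun h _ => count_bad1 hD0 h)).trans ?_
    rw [Finset.sum_const, Finset.card_univ, Fintype.card_fun, Fintype.card_fin, hO, smul_eq_mul,
      mul_comm]
  have h3 : (∑ S ∈ ms, (B2 S).card) * D ^ s ≤ ms.card * (2 ^ s * Fintype.card O) := by
    rw [Finset.sum_mul]
    have : ∀ S ∈ ms, (B2 S).card * D ^ s ≤ 2 ^ s * Fintype.card O := by
      intro S hS
      have := count_bad2 hd hD hD0 S (by rw [hms S hS]; exact hs)
      rw [hms S hS, ← hO] at this
      exact this
    refine (Finset.sum_le_sum this).trans ?_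
    rw [Finset.sum_const, smul_eq_mul]
  have hOpos : 0 < Fintype.card O := by
    rw [hO]
    have : 0 < Fintype.card F := Fintype.card_pos
    positivity
  have h4 : 2 * ms.card * 2 ^ s * Fintype.card O < D ^ s * Fintype.card O :=
    Nat.mul_lt_mul_of_pos_right hcard hOpos
  have hDs : 0 < D ^ s := by positivity
  nlinarith

end part4

section part5
variable {F : Type*} [Field F] [Fintype F] [DecidableEq F]

lemma block_pigeon {d g r : ℕ} (hd : d ≤ Fintype.card F) (hgr : Fintype.card F = g * r)
    (hg : 0 < g) (C : Finset (Fin d → F)) (M : ℕ) (hM : M ^ g ≤ C.card) :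
    ∃ R : Finset F, R.card = r ∧
      M ≤ ((C.image gr).image (fun G => G ∩ (R ×ˢ Finset.univ))).card := by
  classical
  have hc : Fintype.card F = Fintype.card (Fin g × Fin r) := by
    rw [hgr, Fintype.card_prod, Fintype.card_fin, Fintype.card_fin]
  let χ : F ≃ Fin g × Fin r := Fintype.equivOfCardEq hc
  let R : Fin g → Finset F := fun t => Finset.univ.filter (fun i => (χ i).1 = t)
  have hR : ∀ t, (R t).card = r := by
    intro t
    have : (R t).card = (Finset.univ : Finset (Fin r)).card := by
      symm
      apply Finset.card_bij (fun (u : Fin r) _ => χ.symm (t, u))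
      · intro u _
        simp [R]
      · intro u _ v _ h
        simpa using h
      · intro b hb
        simp only [R, Finset.mem_filter, Finset.mem_univ, true_and] at hb
        refine ⟨(χ b).2, Finset.mem_univ _, ?_⟩
        rw [← hb]
        simp
    rw [this]; simp
  by_contra hcon
  push Not at hcon
  have hlt : ∀ t, ((C.image gr).image (fun G => G ∩ (R t ×ˢ (Finset.univ : Finset F)))).card < M :=
    fun t => hcon (R t) (hR t)
  have hinj : C.card ≤ (Fintype.piFinset (fun t : Fin g =>
      (C.image gr).image (fun G => G ∩ (R t ×ˢ (Finset.univ : Finset F))))).card := by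
    apply Finset.card_le_card_of_injOn (fun a => fun t => gr a ∩ (R t ×ˢ (Finset.univ : Finset F)))
    · intro a ha
      simp only [Finset.mem_coe, Fintype.mem_piFinset]
      intro t
      exact Finset.mem_image_of_mem _ (Finset.mem_image_of_mem _ ha)
    · intro a _ b _ hab
      apply gr_injective hd
      ext x
      have h1 := congrFun hab (χ x.1).1
      simp only at h1
      have h2 : x ∈ R (χ x.1).1 ×ˢ (Finset.univ : Finset F) := by
        simp [R]
      constructor
      · intro hx
        have : x ∈ gr a ∩ (R (χ x.1).1 ×ˢ (Finset.univ : Finset F)) := Finset.mem_inter.2 ⟨hx, h2⟩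
        rw [h1] at this
        exact (Finset.mem_inter.1 this).1
      · intro hx
        have : x ∈ gr b ∩ (R (χ x.1).1 ×ˢ (Finset.univ : Finset F)) := Finset.mem_inter.2 ⟨hx, h2⟩
        rw [← h1] at this
        exact (Finset.mem_inter.1 this).1
  rw [Fintype.card_piFinset] at hinj
  have hM0 : 0 < M := lt_of_le_of_lt (Nat.zero_le _) (hlt ⟨0, hg⟩)
  have h3 : ∏ t : Fin g, ((C.image gr).image
      (fun G => G ∩ (R t ×ˢ (Finset.univ : Finset F)))).card ≤ ∏ t : Fin g, (M - 1) :=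
    Finset.prod_le_prod' (fun t _ => by have := hlt t; omega)
  rw [Finset.prod_const, Finset.card_univ, Fintype.card_fin] at h3
  have h4 : (M - 1) ^ g < M ^ g := Nat.pow_lt_pow_left (by omega) (by omega)
  omega

lemma main_nat {n d g r q qq m s D : ℕ} (hn : Fintype.card F = n) (hgr : n = g * r)
    (hg : 0 < g) (hqq : q * qq = n) (hq2 : 2 ≤ q) (hqq2 : 2 ≤ qq) (hm : m + r = n) (hm0 : 0 < m)
    (hdm : d ≤ m) (hsd : s + 1 ≤ d) (hD : D ≤ n) (hD0 : 0 < D)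
    {T : ℕ} (dd : Fin T → ℕ) (Q : (i : Fin T) → Fin (dd i) → MvPolynomial (F × F) F)
    (deg : (i : Fin T) → Fin (dd i) → ℕ)
    (hom : ∀ i j, (Q i j).IsHomogeneous (deg i j))
    (hsum : ∀ i, ∑ j, deg i j = n)
    (hNW : NW F d = ∑ i, ∏ j, Q i j)
    (hkill : 2 * (∑ i, ∑ j, (Q i j).support.card) * 2 ^ (s + 1) < D ^ (s + 1))
    (hent : (q ^ (m - d)) ^ g * (2 * D ^ n) ≤ n ^ d) :
    q ^ (m - d) ≤ 2 * (T * (2 ^ n * ((s * r + 1) * (2 * q) ^ (s * r) * 2 ^ m))) := by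
  classical
  have hd : d ≤ Fintype.card F := by omega
  -- the monomials to be killed
  have hpick : ∀ μ : F × F →₀ ℕ, ∃ S : Finset (F × F), s + 1 ≤ μ.support.card →
      S ⊆ μ.support ∧ S.card = s + 1 := by
    intro μ
    by_cases h : s + 1 ≤ μ.support.card
    · obtain ⟨S, h1, h2⟩ := Finset.exists_subset_card_eq h
      exact ⟨S, fun _ => ⟨h1, h2⟩⟩
    · exact ⟨∅, fun h' => absurd h' h⟩
  choose pick hpick using hpick
  let ms : Finset (Finset (F × F)) := Finset.univ.biUnion (fun i : Fin T =>
    Finset.univ.biUnion (fun j : Fin (dd i) =>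
      ((Q i j).support.filter (fun μ => s + 1 ≤ μ.support.card)).image pick))
  have hms : ∀ S ∈ ms, S.card = s + 1 := by
    intro S hS
    simp only [ms, Finset.mem_biUnion, Finset.mem_image, Finset.mem_filter] at hS
    obtain ⟨i, _, j, _, μ, ⟨_, h⟩, rfl⟩ := hS
    exact (hpick μ h).2
  have hmscard : ms.card ≤ ∑ i, ∑ j, (Q i j).support.card := by
    refine Finset.card_biUnion_le.trans (Finset.sum_le_sum fun i _ => ?_)
    refine Finset.card_biUnion_le.trans (Finset.sum_le_sum fun j _ => ?_)
    exact Finset.card_image_le.trans (Finset.card_filter_le _ _)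
  have hms2 : 2 * ms.card * 2 ^ (s + 1) < D ^ (s + 1) :=
    lt_of_le_of_lt (Nat.mul_le_mul_right _ (Nat.mul_le_mul_left _ hmscard)) hkill
  obtain ⟨a0, h, hcls, hbad⟩ := exists_good hd (hn ▸ hD) hD0 hsd ms hms hms2
  let A : Finset (F × F) := Finset.univ.filter (fun x => h x = h (x.1, ev a0 x.1))
  have hsA : ∀ i j X, ct A (Q i j) X ≠ 0 → X.card ≤ s := by
    intro i j X hX
    by_contra hc
    unfold ct at hX
    split_ifs at hX with hXA
    · have h1 : s + 1 ≤ (ind X).support.card := by rw [ind_support]; omega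
      have h2 := hpick (ind X) h1
      have h3 : pick (ind X) ∈ ms := by
        simp only [ms, Finset.mem_biUnion, Finset.mem_image, Finset.mem_filter]
        exact ⟨i, Finset.mem_univ _, j, Finset.mem_univ _, ind X,
          ⟨MvPolynomial.mem_support_iff.2 hX, h1⟩, rfl⟩
      obtain ⟨x, hx, hne⟩ := hbad _ h3
      have h4 := hXA ((ind_support X) ▸ h2.1 hx)
      exact hne (Finset.mem_filter.1 h4).2
    · exact hX rfl
  have hdegA : ∀ i j X, ct A (Q i j) X ≠ 0 → X.card = deg i j := by
    intro i j X hX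
    unfold ct at hX
    split_ifs at hX with hXA
    · have := hom i j hX
      rw [← ind_degree, Finsupp.degree_eq_weight_one]
      exact this
    · exact absurd rfl hX
  have hC : (q ^ (m - d)) ^ g ≤ (cls h a0).card := by
    rw [hn] at hcls
    have h1 := hent.trans hcls
    rw [mul_comm] at h1
    exact Nat.le_of_mul_le_mul_left h1 (by positivity)
  obtain ⟨R, hR, hM⟩ := block_pigeon hd (hn.trans hgr) hg _ _ hC
  let Y : Finset (F × F) := R ×ˢ Finset.univ
  let Z : Finset (F × F) := Rᶜ ×ˢ Finset.univ
  have hYZ : Disjoint Y Z := by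
    rw [Finset.disjoint_left]
    intro x hx hx'
    simp only [Y, Z, Finset.mem_product, Finset.mem_compl] at hx hx'
    exact hx'.1 hx.1
  have hYZu : ∀ x, x ∈ Y ∪ Z := by
    intro x
    simp only [Y, Z, Finset.mem_union, Finset.mem_product, Finset.mem_compl, Finset.mem_univ]
    tauto
  have hRc : (Rᶜ).card = m := by rw [Finset.card_compl, hn, hR]; omega
  have hZ : Z.card = m * n := by
    simp only [Z]
    rw [Finset.card_product, hRc, Finset.card_univ, hn]
  let E := (cls h a0).image gr
  have hE : ∀ W, ct A (NW F d) W ≠ 0 ↔ W ∈ E := by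
    intro W
    rw [ct_NW A W hd]
    simp only [E, Finset.mem_image, cls, Finset.mem_filter, Finset.mem_univ, true_and]
    constructor
    · rintro ⟨a, rfl, hA⟩
      refine ⟨a, fun i => ?_, rfl⟩
      have : (i, ev a i) ∈ A := hA ((mem_gr _ _).2 rfl)
      exact (Finset.mem_filter.1 this).2
    · rintro ⟨a, ha, rfl⟩
      refine ⟨a, rfl, ?_⟩
      intro x hx
      rw [mem_gr] at hx
      simp only [A, Finset.mem_filter, Finset.mem_univ, true_and]
      have := ha x.1
      rw [hx] at this
      exact this
  obtain ⟨sel, hselE, hselcard, hsel⟩ := lower_li (NW F d) A Y Z hYZ E (fun G _ x _ => hYZu x)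
    (fun W => (hE W).1) (fun W => (hE W).2)
  have hselgr : ∀ G ∈ sel, ∃ a : Fin d → F, gr a = G := by
    intro G hG
    obtain ⟨a, _, ha⟩ := Finset.mem_image.1 (hselE hG)
    exact ⟨a, ha⟩
  have hGZ : ∀ G ∈ sel, (G ∩ Z).card = m := by
    intro G hG
    obtain ⟨a, rfl⟩ := hselgr G hG
    rw [← hRc]
    exact gr_card_inter a Rᶜ
  have hGY : ∀ G ∈ sel, (G ∩ Y).card = r := by
    intro G hG
    obtain ⟨a, rfl⟩ := hselgr G hG
    rw [← hR]
    exact gr_card_inter a R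
  let L := m * qq
  have hLq : L * q = Z.card := by
    rw [hZ, ← hqq]; simp only [L]; ring
  have hL2 : 2 * m ≤ L := by simp only [L]; nlinarith
  have hcount := count_lower sel (fun G => G ∩ Z) Z m d L q
    (fun G _ => Finset.inter_subset_right) hGZ
    (by
      intro G hG G' hG' hne
      obtain ⟨a, rfl⟩ := hselgr G hG
      obtain ⟨b, rfl⟩ := hselgr G' hG'
      have hab : a ≠ b := fun hab => hne (by rw [hab])
      refine le_trans (Finset.card_le_card ?_) (gr_inter_card a b hab)
      intro x hx
      simp only [Finset.mem_inter] at hx ⊢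
      exact ⟨hx.1.1, hx.2.1⟩)
    hLq (by omega) hL2 hdm (by rw [hselcard]; exact hM)
  set UU := (Z.powersetCard L).filter (fun U => ∃ g ∈ sel, g ∩ Z ⊆ U) with hUU
  have hUUm : ∀ U ∈ UU, U ⊆ Z ∧ U.card = L ∧ ∃ G ∈ sel, G ∩ Z ⊆ U := by
    intro U hU
    rw [hUU, Finset.mem_filter, Finset.mem_powersetCard] at hU
    exact ⟨hU.1.1, hU.1.2, hU.2⟩
  obtain ⟨G, hG, hli⟩ := hsel UU (fun U hU => ⟨(hUUm U hU).1, (hUUm U hU).2.2⟩)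
  have hup := upper_bound dd Q deg n s r (L - m) A Z Y hYZ hdegA hsA hsum (NW F d) hNW
    (fun u : UU => u.1 \ (G u ∩ Z)) (fun u => G u ∩ Y) (fun u => Finset.inter_subset_right)
    (fun u => Finset.sdiff_subset.trans (hUUm u.1 u.2).1) (fun u => hGY _ (hG u).1)
    (fun u => by
      rw [Finset.card_sdiff_of_subset (hG u).2, hGZ _ (hG u).1, (hUUm u.1 u.2).2.1]) hli
  rw [Fintype.card_coe] at hup
  have hshf := shf_card Z (L - m) (s * r) q (by omega)
    (by
      rw [← hLq]
      have : L ≤ 2 * (L - m) := by omega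
      calc L * q ≤ 2 * (L - m) * q := Nat.mul_le_mul_right _ this
        _ = _ := by ring) (by omega)
  have hdrop := choose_drop Z.card (L - m) m (by
    have : L * 2 ≤ L * q := Nat.mul_le_mul_left _ hq2
    rw [hLq] at this
    omega)
  have hCpos : 0 < (Z.card - m).choose (L - m) := by
    apply Nat.choose_pos
    have : L * 1 ≤ L * q := Nat.mul_le_mul_left _ (by omega)
    rw [hLq] at this
    omega
  refine Nat.le_of_mul_le_mul_right (c := (Z.card - m).choose (L - m)) ?_ hCpos
  calc q ^ (m - d) * (Z.card - m).choose (L - m) ≤ 2 * UU.card := hcount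
    _ ≤ 2 * (T * (2 ^ n * ((s * r + 1) * (2 * q) ^ (s * r) *
          (2 ^ m * (Z.card - m).choose (L - m))))) := by
        refine Nat.mul_le_mul_left _ (hup.trans ?_)
        refine Nat.mul_le_mul_left _ (Nat.mul_le_mul_left _ (hshf.trans ?_))
        exact Nat.mul_le_mul_left _ hdrop
    _ = _ := by ring

end part5

section part6

lemma sq_le_two_pow (k : ℕ) (hk : 4 ≤ k) : k * k ≤ 2 ^ k := by
  induction k, hk using Nat.le_induction with
  | base => norm_num
  | succ k hk ih =>
    rw [pow_succ]
    nlinarith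

lemma final_nat {F : Type*} [Field F] [Fintype F] {k d γ w s e : ℕ}
    (hn : Fintype.card F = 2 ^ k)
    (hγ : γ ≤ k) (hw : 1 ≤ w) (hwk : w + 1 ≤ k) (hek : e ≤ k)
    (hdm : d + 2 ^ (k - γ) ≤ 2 ^ k) (hsd : s + 1 ≤ d)
    {T : ℕ} (dd : Fin T → ℕ) (Q : (i : Fin T) → Fin (dd i) → MvPolynomial (F × F) F)
    (deg : (i : Fin T) → Fin (dd i) → ℕ)
    (hom : ∀ i j, (Q i j).IsHomogeneous (deg i j))
    (hsum : ∀ i, ∑ j, deg i j = 2 ^ k)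
    (hNW : NW F d = ∑ i, ∏ j, Q i j)
    (hkill : 2 * (∑ i, ∑ j, (Q i j).support.card) * 2 ^ (s + 1) < 2 ^ (e * (s + 1)))
    (hent : w * 2 ^ k * 2 ^ γ + 1 + e * 2 ^ k ≤ k * d)
    (hT : T ≤ 2 ^ 2 ^ k)
    (hfin : w * d + w * 2 ^ (k - γ) + 1 + 3 * 2 ^ k + (w + 2) * (s * 2 ^ (k - γ)) < w * 2 ^ k) :
    False := by
  classical
  obtain ⟨m, hm⟩ : ∃ m, m + 2 ^ (k - γ) = 2 ^ k :=
    ⟨2 ^ k - 2 ^ (k - γ), by omega⟩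
  generalize hndef : 2 ^ k = n at *
  generalize hrdef : 2 ^ (k - γ) = r at *
  have hdm' : d ≤ m := by omega
  have key := main_nat (F := F) (n := n) (d := d) (g := 2 ^ γ) (r := r) (q := 2 ^ w)
    (qq := 2 ^ (k - w)) (m := m) (s := s) (D := 2 ^ e) hn
    (by rw [← hndef, ← hrdef, ← pow_add]; congr 1; omega)
    (by positivity)
    (by rw [← hndef, ← pow_add]; congr 1; omega)
    (by calc 2 = 2 ^ 1 := by norm_num
          _ ≤ _ := Nat.pow_le_pow_right (by norm_num) hw)
    (by calc 2 = 2 ^ 1 := by norm_num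
          _ ≤ _ := Nat.pow_le_pow_right (by norm_num) (by omega))
    hm (by omega) hdm' hsd
    (by rw [← hndef]; exact Nat.pow_le_pow_right (by norm_num) hek) (by positivity) dd Q deg hom hsum hNW
    (by rw [← pow_mul]; exact hkill)
    (by
      have h1 : ((2 ^ w) ^ (m - d)) ^ 2 ^ γ * (2 * (2 ^ e) ^ n) =
          2 ^ (w * (m - d) * 2 ^ γ + (1 + e * n)) := by
        rw [pow_add 2 (w * (m - d) * 2 ^ γ), pow_add 2 1, pow_one, pow_mul, pow_mul, pow_mul 2 e n]
      have h0 : n ^ d = 2 ^ (k * d) := by rw [← hndef, ← pow_mul]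
      rw [h1, h0]
      apply Nat.pow_le_pow_right (by norm_num)
      have h2 : w * (m - d) * 2 ^ γ ≤ w * n * 2 ^ γ :=
        Nat.mul_le_mul_right _ (Nat.mul_le_mul_left _ (by omega))
      omega)
  have h1 : s * r + 1 ≤ 2 ^ (s * r) := Nat.lt_two_pow_self
  have h2 : 2 * (T * (2 ^ n * ((s * r + 1) * (2 * 2 ^ w) ^ (s * r) * 2 ^ m))) ≤
      2 * (2 ^ n * (2 ^ n * (2 ^ (s * r) * (2 * 2 ^ w) ^ (s * r) * 2 ^ m))) := by
    gcongr
  have h3 : 2 * (2 ^ n * (2 ^ n * (2 ^ (s * r) * (2 * 2 ^ w) ^ (s * r) * 2 ^ m))) =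
      2 ^ (1 + n + n + s * r + (w + 1) * (s * r) + m) := by
    have : (2 * 2 ^ w) = 2 ^ (w + 1) := by rw [pow_succ]; ring
    rw [this, ← pow_mul]
    simp only [pow_add, pow_one]
    ring
  have h4 := key.trans (h2.trans h3.le)
  rw [← pow_mul] at h4
  have h5 := (Nat.pow_le_pow_iff_right (by norm_num)).1 h4
  have h6 : w * (m - d) + (w * d + w * r) = w * n := by
    rw [← Nat.mul_add, ← Nat.mul_add]; congr 1; omega
  have h7 : (w + 2) * (s * r) = s * r + (w + 1) * (s * r) := by ring
  omega

end part6

lemma params (δ : ℝ) (hδ0 : 0 < δ) (hδ1 : δ < 1) : ∃ w : ℕ, 1 ≤ w ∧ 6 ≤ w * (1 - δ) ∧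
    ∃ k0 : ℕ, ∀ k : ℕ, k0 ≤ k →
      ((w : ℝ) + 2) * ((Nat.log 2 k : ℕ) + 1) ≤ δ * k / (4 * w) ∧ 12 ≤ δ * k ∧ w + 1 ≤ k ∧
        12 ≤ k := by
  obtain ⟨w, hw⟩ := exists_nat_ge (6 / (1 - δ))
  have h1δ : 0 < 1 - δ := by linarith
  rw [div_le_iff₀ h1δ] at hw
  have hw1 : 1 ≤ w := by
    rcases Nat.eq_zero_or_pos w with h | h
    · rw [h] at hw; norm_num at hw
    · exact h
  have hw0 : (0 : ℝ) < w := by exact_mod_cast hw1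
  refine ⟨w, hw1, hw, ?_⟩
  have hε : 0 < δ / (16 * w * (w + 2)) := by positivity
  have hlog := (Real.isLittleO_log_id_atTop.bound hε)
  have hlog' := tendsto_natCast_atTop_atTop (R := ℝ) |>.eventually hlog
  have hA := tendsto_natCast_atTop_atTop (R := ℝ) |>.eventually
    (Filter.eventually_ge_atTop (12 / δ))
  have hB := tendsto_natCast_atTop_atTop (R := ℝ) |>.eventually
    (Filter.eventually_ge_atTop (8 * w * (w + 2) / δ))
  have hall := (((hlog'.and hA).and hB).and (Filter.eventually_ge_atTop (w + 1))).and
    (Filter.eventually_ge_atTop 12)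
  rw [Filter.eventually_atTop] at hall
  obtain ⟨k0, hk0⟩ := hall
  refine ⟨k0, fun k hk => ?_⟩
  obtain ⟨⟨⟨⟨h1, h2⟩, h3⟩, h4⟩, h5⟩ := hk0 k hk
  rw [div_le_iff₀ hδ0] at h2 h3
  refine ⟨?_, by linarith, h4, h5⟩
  have hkpos : (0 : ℝ) < k := by
    have : 0 < k := by omega
    exact_mod_cast this
  have hk1 : (1 : ℝ) ≤ k := by
    have : 1 ≤ k := by omega
    exact_mod_cast this
  simp only [id, Real.norm_eq_abs] at h1
  rw [abs_of_nonneg (Real.log_nonneg hk1), abs_of_pos hkpos] at h1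
  have hpow : 2 ^ Nat.log 2 k ≤ k := Nat.pow_log_le_self 2 (by omega)
  have hpow' : (2 : ℝ) ^ Nat.log 2 k ≤ k := by exact_mod_cast hpow
  have h6 := Real.log_le_log (by positivity) hpow'
  rw [Real.log_pow] at h6
  have h7 := Real.log_two_gt_d9
  have hs0 : (0 : ℝ) ≤ (Nat.log 2 k : ℕ) := Nat.cast_nonneg _
  have h8 : ((Nat.log 2 k : ℕ) : ℝ) ≤ 2 * (δ / (16 * w * (w + 2)) * k) := by nlinarith
  have h9 : ((w : ℝ) + 2) * (2 * (δ / (16 * w * (w + 2)) * k)) = δ * k / (8 * w) := by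
    field_simp; ring
  have h10 : (w : ℝ) + 2 ≤ δ * k / (8 * w) := by
    rw [le_div_iff₀ (by positivity)]; nlinarith
  have h11 : δ * k / (4 * w) = δ * k / (8 * w) + δ * k / (8 * w) := by
    field_simp; ring
  rw [h11, mul_add, mul_one]
  refine add_le_add ?_ h10
  rw [← h9]
  exact mul_le_mul_of_nonneg_left h8 (by positivity)

set_option maxHeartbeats 2000000 in
/-- For every constant `0 < δ < 1` there are `c > 0` and `n₀` such that
for every `n = 2 ^ k ≥ n₀`, with `d = ⌊δ n⌋`: for every homogeneous ΣΠΣΠ representation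
`NW_d = Σ_{i=1}^{T} Π_{j=1}^{d_i} Q_{i,j}` (each `Q_{i,j}` homogeneous, with
`Σ_j deg Q_{i,j} = n` for each `i`), the quantity
`T + Σ_{i,j} #(monomials of Q_{i,j})` is at least `n ^ (c log log n)`. -/
theorem stmt0 (δ : ℝ) (hδ0 : 0 < δ) (hδ1 : δ < 1) :
    ∃ c : ℝ, 0 < c ∧ ∃ n₀ : ℕ, ∀ k : ℕ, n₀ ≤ 2 ^ k →
      ∀ (F : Type) [Field F] [Fintype F], Fintype.card F = 2 ^ k →
      ∀ (T : ℕ) (dd : Fin T → ℕ)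
        (Q : (i : Fin T) → Fin (dd i) → MvPolynomial (F × F) F)
        (deg : (i : Fin T) → Fin (dd i) → ℕ),
        (∀ i j, (Q i j).IsHomogeneous (deg i j)) →
        (∀ i, ∑ j, deg i j = 2 ^ k) →
        NW F ⌊δ * (2 ^ k : ℝ)⌋₊ = ∑ i, ∏ j, Q i j →
        ((2 : ℝ) ^ k) ^ (c * Real.log (Real.log ((2 : ℝ) ^ k))) ≤
          (T : ℝ) + ∑ i, ∑ j, ((Q i j).support.card : ℝ) := by
  obtain ⟨w, hw1, hw6, k0, hpar⟩ := params δ hδ0 hδ1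
  refine ⟨δ / 4, by positivity, 2 ^ k0, ?_⟩
  intro k hk F _ _ hF T dd Q deg hom hsum hNW
  have hk0 : k0 ≤ k := (Nat.pow_le_pow_iff_right (by norm_num)).1 hk
  obtain ⟨hs, hδk, hwk, hk12⟩ := hpar k hk0
  by_contra hcon
  push Not at hcon
  set s := Nat.log 2 k with hsdef
  have hkR : (12 : ℝ) ≤ k := by exact_mod_cast hk12
  have hk1 : (0 : ℝ) < k := by linarith
  have hwR : (1 : ℝ) ≤ w := by exact_mod_cast hw1
  have hs0 : (0 : ℝ) ≤ s := Nat.cast_nonneg _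
  -- logarithms
  have hl2 := Real.log_two_gt_d9
  have hl2' := Real.log_two_lt_d9
  have hlogs : Real.log k ≤ s + 1 := by
    have h1 : k < 2 ^ (s + 1) := Nat.lt_pow_succ_log_self (by norm_num) k
    have h2 : (k : ℝ) ≤ (2 : ℝ) ^ (s + 1) := by exact_mod_cast h1.le
    have h3 := Real.log_le_log hk1 h2
    rw [Real.log_pow] at h3
    push_cast at h3
    nlinarith
  have hloglog : Real.log (Real.log ((2 : ℝ) ^ k)) ≤ s + 1 := by
    refine le_trans (Real.log_le_log ?_ ?_) hlogs
    · rw [Real.log_pow]; positivity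
    · rw [Real.log_pow]; nlinarith
  have hS : (T : ℝ) + ∑ i, ∑ j, ((Q i j).support.card : ℝ) <
      (2 : ℝ) ^ ((k : ℝ) * (δ / 4 * (s + 1))) := by
    refine lt_of_lt_of_le hcon ?_
    rw [← Real.rpow_natCast 2 k, ← Real.rpow_mul (by norm_num)]
    apply Real.rpow_le_rpow_of_exponent_le (by norm_num)
    apply mul_le_mul_of_nonneg_left _ hk1.le
    apply mul_le_mul_of_nonneg_left _ (by positivity)
    rw [Real.rpow_natCast]
    exact hloglog
  -- parameters
  set e := ⌊δ * k / 2⌋₊ with hedef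
  have he1 : (e : ℝ) ≤ δ * k / 2 := Nat.floor_le (by positivity)
  have he2 : δ * k / 2 < e + 1 := Nat.lt_floor_add_one _
  set x := ⌊δ * k / (4 * w)⌋₊ with hxdef
  have hx1 : (x : ℝ) ≤ δ * k / (4 * w) := Nat.floor_le (by positivity)
  have hx2 : δ * k / (4 * w) < x + 1 := Nat.lt_floor_add_one _
  have hx0 : x ≠ 0 := by
    intro h
    rw [h] at hx2
    push_cast at hx2
    nlinarith
  set γ := Nat.log 2 x with hγdef
  have hg1 : 2 ^ γ ≤ x := Nat.pow_log_le_self 2 hx0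
  have hg2 : x + 1 ≤ 2 ^ (γ + 1) := Nat.lt_pow_succ_log_self (by norm_num) x
  have hg1' : (2 : ℝ) ^ γ ≤ δ * k / (4 * w) := le_trans (by exact_mod_cast hg1) hx1
  have hg2' : δ * k / (4 * w) < 2 * (2 : ℝ) ^ γ := by
    have : ((x : ℝ) + 1) ≤ (2 : ℝ) ^ (γ + 1) := by exact_mod_cast hg2
    rw [pow_succ] at this
    linarith
  have hg3 : ((w : ℝ) + 2) * (s + 1) ≤ 2 * (2 : ℝ) ^ γ := hs.trans hg2'.le
  have hgw : w * (2 : ℝ) ^ γ ≤ δ * k / 4 := by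
    have := mul_le_mul_of_nonneg_left hg1' (show (0 : ℝ) ≤ w by linarith)
    refine this.trans (le_of_eq ?_)
    field_simp
  have hg0 : (1 : ℝ) ≤ (2 : ℝ) ^ γ := one_le_pow₀ (by norm_num)
  have hγk : γ ≤ k := by
    have h4 : δ * k ≤ 1 * k := mul_le_mul_of_nonneg_right hδ1.le hk1.le
    have h5 : 1 * (2 : ℝ) ^ γ ≤ w * (2 : ℝ) ^ γ := mul_le_mul_of_nonneg_right hwR (by linarith)
    have h1 : (2 : ℝ) ^ γ ≤ k := by linarith only [h4, h5, hgw, hk1]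
    have h2 : 2 ^ γ ≤ k := by exact_mod_cast h1
    have h3 : γ < 2 ^ γ := Nat.lt_two_pow_self
    omega
  have hnr : (2 : ℝ) ^ (k - γ) * 2 ^ γ = 2 ^ k := by
    rw [← pow_add]; congr 1; omega
  have hr0 : (0 : ℝ) < (2 : ℝ) ^ (k - γ) := by positivity
  have hnk : (k : ℝ) ≤ (2 : ℝ) ^ k := by
    have : k < 2 ^ k := Nat.lt_two_pow_self
    exact_mod_cast this.le
  have hn0 : (0 : ℝ) < (2 : ℝ) ^ k := by positivity
  set d := ⌊δ * (2 ^ k : ℝ)⌋₊ with hddef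
  have hd1 : (d : ℝ) ≤ δ * 2 ^ k := Nat.floor_le (by positivity)
  have hd2 : δ * 2 ^ k < (d : ℝ) + 1 := Nat.lt_floor_add_one _
  have hδn : 12 ≤ δ * 2 ^ k := hδk.trans (mul_le_mul_of_nonneg_left hnk hδ0.le)
  have hdk : δ * k / (4 * w) ≤ δ * k / 4 := by
    apply div_le_div_of_nonneg_left (by positivity) (by norm_num); linarith
  have hsk : (s : ℝ) + 1 ≤ δ * k / 12 := by
    have : 3 * ((s : ℝ) + 1) ≤ (w + 2) * (s + 1) :=
      mul_le_mul_of_nonneg_right (by linarith) (by linarith)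
    linarith only [this, hs, hdk]
  have hrs : ((w : ℝ) + 2) * (s + 1) * 2 ^ (k - γ) ≤ 2 * 2 ^ k := by
    rw [← hnr]
    have := mul_le_mul_of_nonneg_right hg3 hr0.le
    linarith only [this]
  have hrw : (w : ℝ) * 2 ^ (k - γ) ≤ 2 * 2 ^ k := by
    refine le_trans ?_ hrs
    apply mul_le_mul_of_nonneg_right _ hr0.le
    nlinarith only [mul_nonneg (show (0 : ℝ) ≤ w by linarith) hs0, hs0]
  refine final_nat (F := F) (k := k) (d := d) (γ := γ) (w := w) (s := s) (e := e) hF hγk hw1 hwk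
    ?_ ?_ ?_ dd Q deg hom hsum hNW ?_ ?_ ?_ ?_
  · have h4 : δ * k ≤ 1 * k := mul_le_mul_of_nonneg_right hδ1.le hk1.le
    have : (e : ℝ) ≤ k := by linarith only [h4, he1, hk1]
    exact_mod_cast this
  · have h1 : (2 : ℝ) ^ (k - γ) ≤ (1 - δ) * 2 ^ k := by
      have h3 : 6 * 2 ^ k ≤ (w : ℝ) * (1 - δ) * 2 ^ k := mul_le_mul_of_nonneg_right hw6 hn0.le
      have h2 : (w : ℝ) * 2 ^ (k - γ) ≤ w * ((1 - δ) * 2 ^ k) := by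
        linarith only [h3, hrw, hn0]
      exact le_of_mul_le_mul_left h2 (by linarith)
    have : (d : ℝ) + 2 ^ (k - γ) ≤ 2 ^ k := by linarith
    exact_mod_cast this
  · have h1 : δ * k ≤ δ * 2 ^ k := mul_le_mul_of_nonneg_left hnk hδ0.le
    have : (s : ℝ) + 1 ≤ d := by linarith
    exact_mod_cast this
  · have hreal : 2 * (∑ i, ∑ j, ((Q i j).support.card : ℝ)) * 2 ^ (s + 1) <
        (2 : ℝ) ^ (e * (s + 1)) := by
      have h1 : ∑ i, ∑ j, ((Q i j).support.card : ℝ) < (2 : ℝ) ^ ((k : ℝ) * (δ / 4 * (s + 1))) := by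
        have : (0 : ℝ) ≤ T := Nat.cast_nonneg _
        linarith
      calc 2 * (∑ i, ∑ j, ((Q i j).support.card : ℝ)) * 2 ^ (s + 1)
          < 2 * (2 : ℝ) ^ ((k : ℝ) * (δ / 4 * (s + 1))) * 2 ^ (s + 1) := by
            have h4 : (0 : ℝ) < 2 ^ (s + 1) := by positivity
            exact mul_lt_mul_of_pos_right (by linarith) h4
        _ = (2 : ℝ) ^ (1 + (k : ℝ) * (δ / 4 * (s + 1)) + ((s + 1 : ℕ) : ℝ)) := by
            rw [Real.rpow_add (by norm_num), Real.rpow_add (by norm_num), Real.rpow_one,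
              Real.rpow_natCast]
        _ ≤ (2 : ℝ) ^ ((e * (s + 1) : ℕ) : ℝ) := by
            apply Real.rpow_le_rpow_of_exponent_le (by norm_num)
            push_cast
            have h5 : (δ * k / 2 - 1) * ((s : ℝ) + 1) ≤ e * (s + 1) :=
              mul_le_mul_of_nonneg_right (by linarith) (by linarith)
            have h6 : 0 ≤ (δ * k / 4 - 3) * ((s : ℝ) + 1) :=
              mul_nonneg (by linarith) (by linarith)
            linarith only [h5, h6, hs0]
        _ = _ := Real.rpow_natCast _ _
    exact_mod_cast hreal
  · have : (w : ℝ) * 2 ^ k * 2 ^ γ + 1 + e * 2 ^ k ≤ k * d := by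
      have h1 : (w : ℝ) * 2 ^ k * 2 ^ γ ≤ δ * k / 4 * 2 ^ k := by
        calc (w : ℝ) * 2 ^ k * 2 ^ γ = (w * 2 ^ γ) * 2 ^ k := by ring
          _ ≤ _ := mul_le_mul_of_nonneg_right hgw hn0.le
      have h2 : (e : ℝ) * 2 ^ k ≤ δ * k / 2 * 2 ^ k := mul_le_mul_of_nonneg_right he1 hn0.le
      have h3 : (k : ℝ) * (δ * 2 ^ k - 1) ≤ k * d :=
        mul_le_mul_of_nonneg_left (by linarith) hk1.le
      have h4 : (k : ℝ) * 12 ≤ k * (δ * 2 ^ k) := mul_le_mul_of_nonneg_left hδn hk1.le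
      linarith only [h1, h2, h3, h4, hkR]
    exact_mod_cast this
  · have h0 : (0 : ℝ) ≤ ∑ i, ∑ j, ((Q i j).support.card : ℝ) :=
      Finset.sum_nonneg fun i _ => Finset.sum_nonneg fun j _ => Nat.cast_nonneg _
    have h1 : (T : ℝ) ≤ (2 : ℝ) ^ ((k * k : ℕ) : ℝ) := by
      refine le_trans (by linarith) (hS.le.trans ?_)
      apply Real.rpow_le_rpow_of_exponent_le (by norm_num)
      push_cast
      apply mul_le_mul_of_nonneg_left _ hk1.le
      have h3 : δ / 4 * ((s : ℝ) + 1) ≤ 1 * (s + 1) :=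
        mul_le_mul_of_nonneg_right (by linarith) (by linarith)
      have h4 : δ * k ≤ 1 * k := mul_le_mul_of_nonneg_right hδ1.le hk1.le
      linarith only [h3, h4, hsk, hk1]
    rw [Real.rpow_natCast] at h1
    have h2 : T ≤ 2 ^ (k * k) := by exact_mod_cast h1
    exact h2.trans (Nat.pow_le_pow_right (by norm_num) (sq_le_two_pow k (by omega)))
  · have : (w : ℝ) * d + w * 2 ^ (k - γ) + 1 + 3 * 2 ^ k + (w + 2) * (s * 2 ^ (k - γ)) <
        w * 2 ^ k := by
      have h1 : (w : ℝ) * d ≤ w * (δ * 2 ^ k) := mul_le_mul_of_nonneg_left hd1 (by linarith)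
      have h2 : 6 * 2 ^ k ≤ (w : ℝ) * (1 - δ) * 2 ^ k := mul_le_mul_of_nonneg_right hw6 hn0.le
      linarith only [h1, h2, hrs, hnk, hkR, hr0]
    exact_mod_cast this
end

section
/- For every constant δ with 0 < δ < 1 there exist constants β > 0, c > 0 and an integer n₀ such that for every n = 2^k ≥ n₀ the following holds with d = ⌊δn⌋ and N = n². If NW_d = Σ_{i=1}^{T} Π_{j=1}^{d_i} Q_{i,j} is a homogeneous ΣΠΣΠ representation in which every monomial appearing in any Q_{i,j} has support at most β·log n, then T ≥ 2^{cn}. -/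
open MvPolynomial

namespace NWLB

/-! ### Binomial estimates -/

lemma choose_shrink (l X b : ℕ) (h : l * 2 ^ b ≤ X) (D : ℕ) :
    l.choose D * 2 ^ (b * D) ≤ X.choose D := by
  induction D with
  | zero => simp
  | succ D ih =>
    have h1 := Nat.choose_succ_right_eq l D
    have h2 := Nat.choose_succ_right_eq X D
    have h3 : (l - D) * 2 ^ b ≤ X - D := by
      rw [Nat.sub_mul]
      have : D ≤ D * 2 ^ b := Nat.le_mul_of_pos_right _ (by positivity)
      omega
    refine Nat.le_of_mul_le_mul_right (c := D + 1) ?_ (Nat.succ_pos _)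
    calc l.choose (D+1) * 2 ^ (b * (D+1)) * (D+1)
        = (l.choose (D+1) * (D+1)) * 2 ^ (b*(D+1)) := by ring
      _ = (l.choose D * 2 ^ (b * D)) * ((l - D) * 2 ^ b) := by rw [h1]; ring
      _ ≤ X.choose D * (X - D) := Nat.mul_le_mul ih h3
      _ = _ := h2.symm

lemma choose_sub_bound (l X b D : ℕ) (h : l * 2 ^ b ≤ X) (hD : D ≤ l) :
    (X - D).choose (l - D) * 2 ^ (b * D) ≤ X.choose l := by
  have hlX : l ≤ X := le_trans (Nat.le_mul_of_pos_right _ (by positivity)) h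
  have h1 := Nat.choose_mul (n := X) (k := l) (s := D) hD
  have h2 := choose_shrink l X b h D
  have hpos : 0 < X.choose D := Nat.choose_pos (hD.trans hlX)
  refine Nat.le_of_mul_le_mul_left (c := X.choose D) ?_ hpos
  calc X.choose D * ((X - D).choose (l - D) * 2 ^ (b * D))
      = (X.choose D * (X - D).choose (l - D)) * 2 ^ (b * D) := by ring
    _ = X.choose l * (l.choose D * 2 ^ (b * D)) := by rw [← h1]; ring
    _ ≤ X.choose l * X.choose D := Nat.mul_le_mul_left _ h2
    _ = _ := by ring

lemma choose_halve (l X : ℕ) (h : 2 * l ≤ X) (j : ℕ) :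
    (X + j).choose l ≤ 2 ^ j * X.choose l := by
  induction j with
  | zero => simp
  | succ j ih =>
    have h1 := Nat.choose_mul_succ_eq (X + j) l
    have h2 : (X + j + 1).choose l ≤ 2 * (X + j).choose l := by
      refine Nat.le_of_mul_le_mul_right (c := X + j + 1 - l) ?_ (by omega)
      rw [← h1]
      calc (X+j).choose l * (X + j + 1) ≤ (X+j).choose l * (2 * (X + j + 1 - l)) :=
            Nat.mul_le_mul_left _ (by omega)
        _ = _ := by ring
    rw [← add_assoc]
    refine h2.trans ?_
    rw [pow_succ]; nlinarith

lemma choose_grow (l N B : ℕ) (h : N ≤ l * 2 ^ B) (w : ℕ) :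
    N.choose (l + w) ≤ 2 ^ (B * w) * N.choose l := by
  induction w with
  | zero => simp
  | succ w ih =>
    have h1 := Nat.choose_succ_right_eq N (l + w)
    refine Nat.le_of_mul_le_mul_right (c := l + w + 1) ?_ (by omega)
    rw [← add_assoc, h1]
    calc N.choose (l + w) * (N - (l+w)) ≤ (2 ^ (B * w) * N.choose l) * (2 ^ B * (l + w + 1)) := by
          refine Nat.mul_le_mul ih ?_
          calc N - (l+w) ≤ N := Nat.sub_le _ _
            _ ≤ l * 2 ^ B := h
            _ ≤ _ := by rw [mul_comm]; exact Nat.mul_le_mul_left _ (by omega)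
      _ = _ := by ring

/-! ### Multilinear monomials -/
section ML
variable {V : Type*} [DecidableEq V] {K : Type*} [Field K]

/-- exponent vector of the multilinear monomial of `S` -/
noncomputable def ind (S : Finset V) : V →₀ ℕ :=
  Finsupp.onFinset S (fun v => if v ∈ S then 1 else 0) (by intro a; simp)

lemma ind_apply (S : Finset V) (v : V) : ind S v = if v ∈ S then 1 else 0 := rfl

lemma ind_support (S : Finset V) : (ind S).support = S := by
  ext v; simp [ind_apply]

lemma ind_inj {S T : Finset V} (h : ind S = ind T) : S = T := by
  rw [← ind_support S, h, ind_support]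

lemma ind_add {S T : Finset V} (h : Disjoint S T) : ind S + ind T = ind (S ∪ T) := by
  ext v
  have : v ∈ S → v ∉ T := fun h1 => Finset.disjoint_left.mp h h1
  simp only [Finsupp.add_apply, ind_apply, Finset.mem_union]
  by_cases h1 : v ∈ S <;> by_cases h2 : v ∈ T <;> simp_all

lemma ind_add_eq {S T U : Finset V} (h : ind S + ind T = ind U) : Disjoint S T ∧ S ∪ T = U := by
  have hd : Disjoint S T := by
    rw [Finset.disjoint_left]
    intro v h1 h2
    have := DFunLike.congr_fun h v
    simp only [Finsupp.add_apply, ind_apply, h1, h2, if_true] at this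
    split_ifs at this; all_goals omega
  exact ⟨hd, ind_inj (by rw [← ind_add hd, h])⟩

lemma prod_X_eq (S : Finset V) : ∏ v ∈ S, (X v : MvPolynomial V K) = monomial (ind S) 1 := by
  induction S using Finset.induction_on with
  | empty =>
    have : ind (∅ : Finset V) = 0 := by ext v; simp [ind_apply]
    simp [this]
  | insert v S hv ih =>
    rw [Finset.prod_insert hv, ih, Finset.insert_eq, ← ind_add (by simpa using hv), X, monomial_mul]
    have : ind ({v} : Finset V) = Finsupp.single v 1 := by
      ext w; simp [ind_apply, Finsupp.single_apply, eq_comm]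
    rw [this, one_mul]

/-- the multilinear coefficients -/
noncomputable def mu : MvPolynomial V K →ₗ[K] (Finset V → K) :=
  LinearMap.pi fun S => lcoeff K (ind S)

lemma mu_apply (p : MvPolynomial V K) (S : Finset V) : mu p S = coeff (ind S) p := rfl

lemma mu_mul_zero (e : V →₀ ℕ) (p : MvPolynomial V K) (h : ¬ e = ind e.support) :
    mu (monomial e 1 * p) = 0 := by
  have : ∃ v, 2 ≤ e v := by
    by_contra hc
    push Not at hc
    apply h
    ext v
    have := hc v
    rw [ind_apply]
    split_ifs with hv
    · rw [Finsupp.mem_support_iff] at hv; omega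
    · simpa using hv
  obtain ⟨v, hv⟩ := this
  ext S
  rw [mu_apply, coeff_monomial_mul', if_neg]
  · rfl
  · intro hle
    have := hle v
    rw [ind_apply] at this
    split_ifs at this <;> omega

/-- span of shifted partial products -/
noncomputable def G {ι : Type*} [DecidableEq ι] (Q : ι → MvPolynomial V K) (J : Finset ι) (s r : ℕ) :
    Submodule K (MvPolynomial V K) :=
  Submodule.span K {p | ∃ A ⊆ J, ∃ e : V →₀ ℕ, e.support.card ≤ r * s ∧
    p = monomial e 1 * ∏ j ∈ J \ A, Q j}

lemma pderiv_support (p : MvPolynomial V K) (v : V) (s : ℕ)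
    (h : ∀ u ∈ p.support, u.support.card ≤ s) :
    pderiv v p ∈ Submodule.span K {q | ∃ e : V →₀ ℕ, e.support.card ≤ s ∧ q = monomial e (1:K)} := by
  rw [p.as_sum, map_sum]
  refine Submodule.sum_mem _ fun u hu => ?_
  rw [pderiv_monomial]
  have : monomial (u - Finsupp.single v 1) (coeff u p * (u v : K)) =
    (coeff u p * (u v : K)) • monomial (u - Finsupp.single v 1) (1:K) := by
    rw [smul_monomial, smul_eq_mul, mul_one]
  rw [this]
  refine Submodule.smul_mem _ _ (Submodule.subset_span ⟨_, ?_, rfl⟩)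
  refine (Finset.card_le_card ?_).trans (h u hu)
  intro w hw
  simp only [Finsupp.mem_support_iff, Finsupp.tsub_apply] at hw ⊢
  omega

lemma pderiv_finset_prod {ι : Type*} [DecidableEq ι] (Q : ι → MvPolynomial V K) (J : Finset ι) (v : V) :
    pderiv v (∏ j ∈ J, Q j) = ∑ j ∈ J, (∏ i ∈ J.erase j, Q i) • pderiv v (Q j) := by
  induction J using Finset.induction_on with
  | empty => simp
  | insert a J ha ih =>
    rw [Finset.prod_insert ha, Derivation.leibniz, ih, Finset.sum_insert ha,
      Finset.erase_insert ha, add_comm, Finset.smul_sum]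
    congr 1
    refine Finset.sum_congr rfl fun j hj => ?_
    have hja : a ≠ j := fun h => ha (h ▸ hj)
    rw [Finset.erase_insert_of_ne hja, Finset.prod_insert (by simp [ha]), smul_smul]

lemma G_pderiv {ι : Type*} [DecidableEq ι] (Q : ι → MvPolynomial V K) (J : Finset ι) (s r : ℕ)
    (hQ : ∀ j ∈ J, ∀ u ∈ (Q j).support, u.support.card ≤ s) (v : V) (p : MvPolynomial V K)
    (hp : p ∈ G Q J s r) : pderiv v p ∈ G Q J s (r + 1) := by
  unfold G at hp
  induction hp using Submodule.span_induction with
  | zero => rw [map_zero]; exact Submodule.zero_mem _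
  | add x y _ _ hx hy => rw [map_add]; exact Submodule.add_mem _ hx hy
  | smul a x _ hx => rw [Derivation.map_smul]; exact Submodule.smul_mem _ _ hx
  | mem p hp =>
    obtain ⟨A, hA, e, he, rfl⟩ := hp
    rw [Derivation.leibniz, smul_eq_mul, smul_eq_mul]
    refine Submodule.add_mem _ ?_ ?_
    · rw [pderiv_finset_prod, Finset.mul_sum]
      refine Submodule.sum_mem _ fun j hj => ?_
      have hjJ := (Finset.mem_sdiff.mp hj).1
      have h1 := pderiv_support (Q j) v s (hQ j hjJ)
      rw [smul_eq_mul]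
      revert h1
      generalize pderiv v (Q j) = q
      intro h1
      induction h1 using Submodule.span_induction with
      | zero => simp
      | add x y _ _ hx hy => rw [mul_add, mul_add]; exact Submodule.add_mem _ hx hy
      | smul a x _ hx => 
        rw [mul_smul_comm, mul_smul_comm]; exact Submodule.smul_mem _ _ hx
      | mem q hq =>
        obtain ⟨e', he', rfl⟩ := hq
        refine Submodule.subset_span ⟨insert j A, Finset.insert_subset hjJ hA, e + e', ?_, ?_⟩
        · refine (Finset.card_le_card Finsupp.support_add).trans ?_
          refine (Finset.card_union_le _ _).trans ?_
          rw [Nat.succ_mul]; omega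
        · have : (J \ A).erase j = J \ insert j A := by
            ext; simp; tauto
          rw [this, mul_comm (∏ j ∈ _, _), ← mul_assoc, monomial_mul, one_mul]
    · rw [pderiv_monomial]
      have : monomial (e - Finsupp.single v 1) (1 * (e v : K)) =
        (e v : K) • monomial (e - Finsupp.single v 1) (1:K) := by
        rw [smul_monomial, smul_eq_mul, mul_one, one_mul]
      rw [this, mul_smul_comm]
      refine Submodule.smul_mem _ _ (Submodule.subset_span ⟨A, hA, _, ?_, mul_comm _ _⟩)
      have : (e - Finsupp.single v 1).support.card ≤ e.support.card := by
        refine Finset.card_le_card ?_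
        intro w hw
        simp only [Finsupp.mem_support_iff, Finsupp.tsub_apply] at hw ⊢
        omega
      rw [Nat.succ_mul]; omega

/-- iterated derivative -/
noncomputable def D (L : List V) : MvPolynomial V K →ₗ[K] MvPolynomial V K :=
  L.foldr (fun v g => (pderiv v).toLinearMap ∘ₗ g) LinearMap.id

lemma D_nil (p : MvPolynomial V K) : D [] p = p := rfl
lemma D_cons (v : V) (L : List V) (p : MvPolynomial V K) : D (v :: L) p = pderiv v (D L p) := rfl

lemma D_prod_mem {ι : Type*} [DecidableEq ι] (Q : ι → MvPolynomial V K) (J : Finset ι) (s : ℕ)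
    (hQ : ∀ j ∈ J, ∀ u ∈ (Q j).support, u.support.card ≤ s) (L : List V) :
    D L (∏ j ∈ J, Q j) ∈ G Q J s L.length := by
  induction L with
  | nil => 
    refine Submodule.subset_span ⟨∅, by simp, 0, by simp, ?_⟩
    simp [D_nil]
  | cons v L ih =>
    rw [D_cons]
    exact G_pderiv Q J s _ hQ v _ ih

lemma mu_shift_mem {ι : Type*} [DecidableEq ι] (Q : ι → MvPolynomial V K) (J : Finset ι) (s r l : ℕ)
    (m : Finset V) (hm : m.card = l) (p : MvPolynomial V K) (hp : p ∈ G Q J s r) :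
    mu (monomial (ind m) 1 * p) ∈ Submodule.span K {x : Finset V → K | ∃ A ⊆ J, ∃ m' : Finset V,
      l ≤ m'.card ∧ m'.card ≤ l + r * s ∧ x = mu (monomial (ind m') 1 * ∏ j ∈ J \ A, Q j)} := by
  unfold G at hp
  induction hp using Submodule.span_induction with
  | zero => rw [mul_zero, map_zero]; exact Submodule.zero_mem _
  | add x y _ _ hx hy => rw [mul_add, map_add]; exact Submodule.add_mem _ hx hy
  | smul a x _ hx => rw [mul_smul_comm, map_smul]; exact Submodule.smul_mem _ _ hx
  | mem p hp =>
    obtain ⟨A, hA, e, he, rfl⟩ := hp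
    rw [← mul_assoc, monomial_mul, one_mul]
    by_cases h : ind m + e = ind (ind m + e).support
    · rw [h]
      refine Submodule.subset_span ⟨A, hA, _, ?_, ?_, rfl⟩
      · rw [← hm]
        refine Finset.card_le_card ?_
        intro v hv
        simp [ind_apply, hv]
      · refine (Finset.card_le_card Finsupp.support_add).trans ?_
        refine (Finset.card_union_le _ _).trans ?_
        rw [ind_support]; omega
    · rw [mu_mul_zero _ _ h]; exact Submodule.zero_mem _

/-- triangular families are linearly independent -/
lemma linInd_tri {κ S : Type*} (x : κ → S → K) (u : κ → S) (wt : S → ℕ)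
    (hu : Function.Injective u) (hwt : Function.Injective wt)
    (h1 : ∀ i, x i (u i) ≠ 0) (h2 : ∀ i t, wt (u i) < wt t → x i t = 0) :
    LinearIndependent K x := by
  classical
  rw [linearIndependent_iff']
  intro s g hg
  by_contra hc
  push Not at hc
  have hne : (s.filter fun i => g i ≠ 0).Nonempty := by
    obtain ⟨i, hi, hgi⟩ := hc
    exact ⟨i, by simp [hi, hgi]⟩
  obtain ⟨i, hi, hmax⟩ := Finset.exists_max_image _ (fun i => wt (u i)) hne
  rw [Finset.mem_filter] at hi
  have := congrFun hg (u i)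
  rw [Finset.sum_apply, Finset.sum_eq_single i] at this
  · simp only [Pi.smul_apply, smul_eq_mul, Pi.zero_apply, mul_eq_zero] at this
    exact this.elim hi.2 (h1 i)
  · intro j hj hji
    by_cases hgj : g j = 0
    · simp [hgj]
    · have hle := hmax j (by simp [hj, hgj])
      have hne : wt (u j) ≠ wt (u i) := fun h => hji (hu (hwt h))
      simp [h2 j (u i) (lt_of_le_of_ne hle hne)]
  · intro h; exact absurd hi.1 h

lemma exists_weight (V : Type*) [Fintype V] [DecidableEq V] : ∃ wt : Finset V → ℕ,
    Function.Injective wt ∧ ∀ S T, Disjoint S T → wt (S ∪ T) = wt S + wt T := by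
  let e := Fintype.equivFin V
  let emb : V ↪ ℕ := ⟨fun v => (e v : ℕ), fun a b h => e.injective (Fin.ext h)⟩
  refine ⟨fun S => ∑ v ∈ S, 2 ^ (emb v), ?_, ?_⟩
  · intro S T h
    have h' : ∑ i ∈ S.map emb, 2 ^ i = ∑ i ∈ T.map emb, 2 ^ i := by
      simpa [Finset.sum_map] using h
    exact Finset.map_injective emb (Finset.geomSum_injective (le_refl 2) h')
  · intro S T h
    exact Finset.sum_union h

end ML

/-! ### Counting good shifts -/
section Comb
variable {V : Type*} [DecidableEq V] [Fintype V]

lemma card_superset (Y E : Finset V) (hE : E ⊆ Y) (l b : ℕ) (h : l * 2 ^ b ≤ Y.card) :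
    ((Y.powersetCard l).filter (fun m => E ⊆ m)).card * 2 ^ (b * E.card) ≤ Y.card.choose l := by
  by_cases hEl : E.card ≤ l
  · refine le_trans (Nat.mul_le_mul_right _ ?_) (choose_sub_bound l Y.card b E.card h hEl)
    rw [← Finset.card_sdiff_of_subset hE, ← Finset.card_powersetCard]
    refine Finset.card_le_card_of_injOn (fun m => m \ E) ?_ ?_
    · intro m hm
      simp only [Finset.coe_filter, Finset.mem_powersetCard, Set.mem_setOf_eq] at hm
      simp only [Finset.mem_coe, Finset.mem_powersetCard]
      refine ⟨Finset.sdiff_subset_sdiff hm.1.1 (le_refl _), ?_⟩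
      rw [Finset.card_sdiff_of_subset hm.2, hm.1.2]
    · intro m hm m' hm' heq
      simp only [Finset.coe_filter, Finset.mem_powersetCard, Set.mem_setOf_eq] at hm hm'
      simp only at heq
      rw [← Finset.sdiff_union_of_subset hm.2, heq, Finset.sdiff_union_of_subset hm'.2]
  · have : (Y.powersetCard l).filter (fun m => E ⊆ m) = ∅ := by
      rw [Finset.filter_eq_empty_iff]
      intro m hm hEm
      rw [Finset.mem_powersetCard] at hm
      have := Finset.card_le_card hEm
      omega
    rw [this]; simp

lemma good_card {A : Type*} [Fintype A] [DecidableEq A] (S : A → Finset V) (l b D n' : ℕ)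
    (hcard : ∀ a, (S a).card = n') (hsep : ∀ a a', a ≠ a' → D ≤ (S a' \ S a).card)
    (hX : l * 2 ^ b ≤ Fintype.card V - n') (hA : Fintype.card A * 2 ≤ 2 ^ (b * D)) (a : A) :
    (Fintype.card V - n').choose l ≤
      2 * (((S a)ᶜ.powersetCard l).filter (fun m => ∀ a', a' ≠ a → ¬ S a' ⊆ m ∪ S a)).card := by
  set Y := (S a)ᶜ with hY
  have hYc : Y.card = Fintype.card V - n' := by rw [hY, Finset.card_compl, hcard]
  set good := (Y.powersetCard l).filter (fun m => ∀ a', a' ≠ a → ¬ S a' ⊆ m ∪ S a) with hgood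
  have hbad : ∀ a', ∃ B : Finset (Finset V), B.card * 2 ^ (b * D) ≤ (Fintype.card V - n').choose l ∧
      (∀ m ∈ Y.powersetCard l, a' ≠ a → S a' ⊆ m ∪ S a → m ∈ B) := by
    intro a'
    by_cases haa : a' = a
    · exact ⟨∅, by simp, fun m _ h => absurd haa h⟩
    · obtain ⟨E, hE, hEc⟩ := Finset.exists_subset_card_eq (hsep a a' (Ne.symm haa))
      refine ⟨(Y.powersetCard l).filter (fun m => E ⊆ m), ?_, ?_⟩
      · rw [← hYc, ← hEc]
        refine card_superset Y E ?_ l b (by rw [hYc]; exact hX)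
        intro v hv
        have := hE hv
        rw [hY]
        simp only [Finset.mem_sdiff, Finset.mem_compl] at this ⊢
        exact this.2
      · intro m hm _ hs
        refine Finset.mem_filter.mpr ⟨hm, ?_⟩
        intro v hv
        have h1 := Finset.mem_sdiff.mp (hE hv)
        exact (Finset.mem_union.mp (hs h1.1)).resolve_right h1.2
  choose B hB1 hB2 using hbad
  have hsub : Y.powersetCard l ⊆ good ∪ Finset.univ.biUnion B := by
    intro m hm
    by_cases hg : m ∈ good
    · exact Finset.mem_union_left _ hg
    · refine Finset.mem_union_right _ ?_
      rw [hgood, Finset.mem_filter] at hg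
      push Not at hg
      obtain ⟨a', h1, h2⟩ := hg hm
      exact Finset.mem_biUnion.mpr ⟨a', Finset.mem_univ _, hB2 a' m hm h1 h2⟩
  have hc := (Finset.card_le_card hsub).trans (Finset.card_union_le _ _)
  rw [Finset.card_powersetCard, hYc] at hc
  have hb : (Finset.univ.biUnion B).card * 2 ^ (b * D) ≤
      Fintype.card A * (Fintype.card V - n').choose l := by
    refine (Nat.mul_le_mul_right _ Finset.card_biUnion_le).trans ?_
    rw [Finset.sum_mul]
    refine (Finset.sum_le_sum fun a' _ => hB1 a').trans ?_
    simp
  have hb2 : 2 * (Finset.univ.biUnion B).card ≤ (Fintype.card V - n').choose l := by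
    refine Nat.le_of_mul_le_mul_right (c := 2 ^ (b * D)) ?_ (by positivity)
    nlinarith [Nat.mul_le_mul_right ((Fintype.card V - n').choose l) hA]
  omega

lemma card_layers (l w B : ℕ) (h : Fintype.card V ≤ l * 2 ^ B) :
    (Finset.univ.filter (fun m : Finset V => l ≤ m.card ∧ m.card ≤ l + w)).card ≤
      (w + 1) * (2 ^ (B * w) * (Fintype.card V).choose l) := by
  have : (Finset.univ.filter (fun m : Finset V => l ≤ m.card ∧ m.card ≤ l + w)) ⊆
      (Finset.range (w + 1)).biUnion (fun j => Finset.univ.powersetCard (l + j)) := by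
    intro m hm
    rw [Finset.mem_filter] at hm
    rw [Finset.mem_biUnion]
    refine ⟨m.card - l, by rw [Finset.mem_range]; omega, ?_⟩
    rw [Finset.mem_powersetCard]
    exact ⟨Finset.subset_univ _, by omega⟩
  refine (Finset.card_le_card this).trans (Finset.card_biUnion_le.trans ?_)
  refine (Finset.sum_le_card_nsmul _ _ (2 ^ (B * w) * (Fintype.card V).choose l) ?_).trans ?_
  · intro j hj
    rw [Finset.mem_range] at hj
    rw [Finset.card_powersetCard, Finset.card_univ]
    refine (choose_grow l _ B h j).trans (Nat.mul_le_mul_right _ ?_)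
    exact Nat.pow_le_pow_right (by norm_num) (Nat.mul_le_mul_left _ (by omega))
  · simp
end Comb

/-! ### The Nisan–Wigderson polynomial -/
section NWsec
variable {F : Type*} [Field F]

/-- evaluation of a coefficient vector -/
def ev {d : ℕ} (c : Fin d → F) (i : F) : F := ∑ j : Fin d, c j * i ^ (j : ℕ)

lemma ev_inj {d : ℕ} (c c' : Fin d → F) (s : Finset F) (hs : d ≤ s.card)
    (h : ∀ i ∈ s, ev c i = ev c' i) : c = c' := by
  have key : (∑ j : Fin d, Polynomial.C (c j) * Polynomial.X ^ (j : ℕ)) =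
      ∑ j : Fin d, Polynomial.C (c' j) * Polynomial.X ^ (j : ℕ) := by
    refine Polynomial.eq_of_degrees_lt_of_eval_finset_eq s
      ((Polynomial.degree_sum_fin_lt c).trans_le (by exact_mod_cast hs))
      ((Polynomial.degree_sum_fin_lt c').trans_le (by exact_mod_cast hs)) ?_
    intro i hi
    have := h i hi
    simpa [Polynomial.eval_finset_sum, ev] using this
  funext j
  have := congrArg (fun p => Polynomial.coeff p (j : ℕ)) key
  simpa [Polynomial.finset_sum_coeff, Polynomial.coeff_C_mul, Polynomial.coeff_X_pow,
    Fin.val_inj] using this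

lemma ev_extend {r d : ℕ} (h : r ≤ d) (a : Fin r → F) : ∃ c : Fin d → F, ∀ i, ev c i = ev a i := by
  obtain ⟨e, rfl⟩ := Nat.exists_eq_add_of_le h
  refine ⟨Fin.append a (fun _ => 0), fun i => ?_⟩
  simp [ev, Fin.sum_univ_add]

variable [Fintype F] [DecidableEq F]

/-- the part of the graph of `f` over the rows outside `R` -/
def Sg (R : Finset F) (f : F → F) : Finset (F × F) :=
  Rᶜ.map ⟨fun i => (i, f i), fun _ _ h => (Prod.ext_iff.mp h).1⟩

lemma mem_Sg (R : Finset F) (f : F → F) (v : F × F) : v ∈ Sg R f ↔ v.1 ∉ R ∧ v.2 = f v.1 := by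
  simp only [Sg, Finset.mem_map, Finset.mem_compl, Function.Embedding.coeFn_mk]
  constructor
  · rintro ⟨i, hi, rfl⟩; exact ⟨hi, rfl⟩
  · rintro ⟨h1, h2⟩; exact ⟨v.1, h1, Prod.ext rfl h2.symm⟩

lemma card_Sg (R : Finset F) (f : F → F) : (Sg R f).card = Fintype.card F - R.card := by
  rw [Sg, Finset.card_map, Finset.card_compl]

lemma Sg_inj {d : ℕ} (R : Finset F) (h : d + R.card ≤ Fintype.card F) (c c' : Fin d → F)
    (he : Sg R (ev c) = Sg R (ev c')) : c = c' := by
  refine ev_inj c c' Rᶜ (by rw [Finset.card_compl]; omega) ?_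
  intro i hi
  have : (i, ev c i) ∈ Sg R (ev c') := by
    rw [← he, mem_Sg]; exact ⟨by simpa using hi, rfl⟩
  rw [mem_Sg] at this
  exact this.2

lemma Sg_sep {d : ℕ} (R : Finset F) (D : ℕ) (h : D + R.card + d ≤ Fintype.card F) (c c' : Fin d → F)
    (hne : c ≠ c') : D ≤ (Sg R (ev c') \ Sg R (ev c)).card := by
  set agree := Finset.univ.filter (fun i => ev c i = ev c' i) with hag
  have h1 : agree.card < d := by
    by_contra hc
    exact hne (ev_inj c c' agree (by omega) (by intro i hi; simpa [hag] using hi))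
  have h2 : ((Rᶜ \ agree).map ⟨fun i => (i, ev c' i), fun _ _ h => (Prod.ext_iff.mp h).1⟩) ⊆
      Sg R (ev c') \ Sg R (ev c) := by
    intro v hv
    simp only [Finset.mem_map, Finset.mem_sdiff, Finset.mem_compl,
      Function.Embedding.coeFn_mk] at hv
    obtain ⟨i, ⟨hi, hi2⟩, rfl⟩ := hv
    rw [Finset.mem_sdiff, mem_Sg, mem_Sg]
    refine ⟨⟨hi, rfl⟩, fun h => hi2 ?_⟩
    simp only [hag, Finset.mem_filter, Finset.mem_univ, true_and]
    exact h.2.symm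
  have h3 := Finset.card_le_card h2
  rw [Finset.card_map] at h3
  have h4 := Finset.le_card_sdiff agree Rᶜ
  rw [Finset.card_compl] at h4
  omega

lemma D_prod (f a : F → F) (L : List F) (hL : L.Nodup) :
    D (L.map fun i => (i, a i)) (∏ i : F, (X (i, f i) : MvPolynomial (F × F) F)) =
      if ∀ i ∈ L, f i = a i then ∏ i ∈ L.toFinsetᶜ, X (i, f i) else 0 := by
  induction L with
  | nil => simp [D_nil]
  | cons i L ih =>
    rw [List.nodup_cons] at hL
    rw [List.map_cons, D_cons, ih hL.2]
    by_cases h : ∀ i ∈ L, f i = a i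
    · rw [if_pos h, pderiv_finset_prod, Finset.sum_eq_single i]
      · have h1 : L.toFinsetᶜ.erase i = (i :: L).toFinsetᶜ := by
          ext j; simp
        rw [h1, pderiv_X]
        by_cases h2 : f i = a i
        · rw [if_pos (by simpa [h2] using h), h2]
          simp
        · rw [if_neg (by simp [h2])]
          rw [Pi.single_eq_of_ne (by simpa using h2)]
          simp
      · intro j _ hj
        rw [pderiv_X, Pi.single_eq_of_ne (by simp [hj])]
        simp
      · intro h3
        simp [hL.1] at h3
    · rw [if_neg h, map_zero, if_neg]
      intro h'
      exact h (fun j hj => h' j (List.mem_cons_of_mem _ hj))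

lemma D_NW (d : ℕ) (a : F → F) (R : Finset F) :
    D (R.toList.map fun i => (i, a i)) (NW F d) =
      ∑ c : Fin d → F, if ∀ i ∈ R, ev c i = a i then monomial (ind (Sg R (ev c))) 1 else 0 := by
  rw [NW, map_sum]
  refine Finset.sum_congr rfl fun c _ => ?_
  have := D_prod (ev c) a R.toList R.nodup_toList
  simp only [Finset.mem_toList, Finset.toList_toFinset] at this
  rw [← prod_X_eq]
  simp only [Sg, Finset.prod_map, Function.Embedding.coeFn_mk]
  exact this

lemma mu_D_NW (d : ℕ) (a : F → F) (R : Finset F) (m U : Finset (F × F)) :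
    mu (monomial (ind m) 1 * D (R.toList.map fun i => (i, a i)) (NW F d)) U =
      ∑ c : Fin d → F, if (∀ i ∈ R, ev c i = a i) ∧ ind m + ind (Sg R (ev c)) = ind U
        then (1 : F) else 0 := by
  rw [D_NW, Finset.mul_sum, mu_apply, coeff_sum]
  refine Finset.sum_congr rfl fun c _ => ?_
  by_cases h : ∀ i ∈ R, ev c i = a i
  · rw [if_pos h, monomial_mul, coeff_monomial, one_mul]
    by_cases h2 : ind m + ind (Sg R (ev c)) = ind U
    · rw [if_pos h2, if_pos ⟨h, h2⟩]
    · rw [if_neg h2, if_neg (fun h' => h2 h'.2)]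
  · rw [if_neg h, if_neg (fun h' => h h'.1), mul_zero, coeff_zero]

end NWsec

/-! ### The core inequality -/
section Core
variable {F : Type} [Field F] [Fintype F]

lemma const_split {V : Type*} {K : Type*} [Field K] {D : ℕ} (Q : Fin D → MvPolynomial V K)
    (deg : Fin D → ℕ) (hQ : ∀ j, (Q j).IsHomogeneous (deg j)) :
    ∃ c : K, ∏ j, Q j = c • ∏ j ∈ Finset.univ.filter (fun j => deg j ≠ 0), Q j := by
  have h0 : ∀ j, ∃ c : K, deg j = 0 → Q j = C c := by
    intro j
    by_cases h : deg j = 0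
    · have h1 := hQ j
      rw [h] at h1
      exact ⟨_, fun _ => totalDegree_eq_zero_iff_eq_C.mp ((totalDegree_zero_iff_isHomogeneous _).mpr h1)⟩
    · exact ⟨0, fun h' => absurd h' h⟩
  choose c hc using h0
  refine ⟨∏ j ∈ Finset.univ.filter (fun j => ¬ deg j ≠ 0), c j, ?_⟩
  rw [← Finset.prod_filter_mul_prod_filter_not Finset.univ (fun j => deg j ≠ 0), smul_eq_C_mul,
    map_prod, mul_comm]
  congr 1
  refine Finset.prod_congr rfl fun j hj => hc j ?_
  simpa using hj

lemma card_nonconst {D n : ℕ} (deg : Fin D → ℕ) (h : ∑ j, deg j = n) :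
    (Finset.univ.filter (fun j => deg j ≠ 0)).card ≤ n := by
  rw [← h, Finset.card_filter]
  refine Finset.sum_le_sum fun j _ => ?_
  split_ifs <;> omega

theorem core (n d r s b l D : ℕ) (hn : Fintype.card F = n) (hrd : r ≤ d) (hD : D + r + d ≤ n)
    (hn2 : 2 * n ≤ n ^ 2) (hl : l * 2 ^ (b + 1) = n ^ 2) (hb : 1 ≤ b)
    (hM : n ^ r * 2 ≤ 2 ^ (b * D))
    (T : ℕ) (dd : Fin T → ℕ) (Q : (i : Fin T) → Fin (dd i) → MvPolynomial (F × F) F)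
    (deg : (i : Fin T) → Fin (dd i) → ℕ)
    (hhom : ∀ i j, (Q i j).IsHomogeneous (deg i j))
    (hdeg : ∀ i, ∑ j, deg i j = n)
    (hs : ∀ i j, ∀ u ∈ (Q i j).support, u.support.card ≤ s)
    (hNW : NW F d = ∑ i, ∏ j, Q i j) :
    n ^ r ≤ T * (2 * 2 ^ n * 2 ^ n * (r * s + 1) * 2 ^ ((b + 1) * (r * s))) := by
  classical
  obtain ⟨wt, hwt, hadd⟩ := exists_weight (F × F)
  obtain ⟨R, -, hR⟩ := Finset.exists_subset_card_eq (s := (Finset.univ : Finset F)) (n := r)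
    (by rw [Finset.card_univ]; omega)
  have hN : Fintype.card (F × F) = n ^ 2 := by rw [Fintype.card_prod, hn, sq]
  -- leading polynomials
  have hf : ∀ a : Fin r → F, ∃ c : Fin d → F, (∀ i ∈ R, ev c i = ev a i) ∧
      ∀ c' : Fin d → F, (∀ i ∈ R, ev c' i = ev a i) → wt (Sg R (ev c')) ≤ wt (Sg R (ev c)) := by
    intro a
    have hne : (Finset.univ.filter (fun c : Fin d → F => ∀ i ∈ R, ev c i = ev a i)).Nonempty := by
      obtain ⟨c, hc⟩ := ev_extend hrd a
      exact ⟨c, by simp [hc]⟩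
    obtain ⟨c, hc, hmax⟩ := Finset.exists_max_image _ (fun c => wt (Sg R (ev c))) hne
    refine ⟨c, by simpa using hc, fun c' hc' => hmax c' (by simpa using hc')⟩
  choose f hf1 hf2 using hf
  set S : (Fin r → F) → Finset (F × F) := fun a => Sg R (ev (f a)) with hS
  have hScard : ∀ a, (S a).card = n - r := fun a => by rw [hS, card_Sg, hn, hR]
  have hfinj : ∀ a a', a ≠ a' → f a ≠ f a' := by
    intro a a' hne h
    refine hne (ev_inj a a' R hR.ge ?_)
    intro i hi
    rw [← hf1 a i hi, ← hf1 a' i hi, h]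
  have hsep : ∀ a a', a ≠ a' → D ≤ (S a' \ S a).card := fun a a' hne =>
    Sg_sep R D (by omega) (f a) (f a') (hfinj a a' hne)
  have hpow : l * 2 ^ b * 2 = n ^ 2 := by rw [← hl]; ring
  have hX : l * 2 ^ b ≤ Fintype.card (F × F) - (n - r) := by rw [hN]; omega
  have hAcard : Fintype.card (Fin r → F) = n ^ r := by simp [hn]
  set Gd : (Fin r → F) → Finset (Finset (F × F)) := fun a =>
    ((S a)ᶜ.powersetCard l).filter (fun m => ∀ a', a' ≠ a → ¬ S a' ⊆ m ∪ S a) with hGd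
  have hgood : ∀ a, (n ^ 2 - (n - r)).choose l ≤ 2 * (Gd a).card := fun a => by
    have := good_card S l b D (n - r) hScard hsep hX (by rw [hAcard]; exact hM) a
    rwa [hN] at this
  -- the family
  let κ := (Finset.univ : Finset (Fin r → F)).sigma Gd
  have hκ : n ^ r * (n ^ 2 - (n - r)).choose l ≤ 2 * κ.card := by
    rw [Finset.card_sigma, Finset.mul_sum, ← hAcard, ← Finset.card_univ, ← smul_eq_mul]
    exact Finset.card_nsmul_le_sum _ _ _ fun a _ => hgood a
  let x : κ → Finset (F × F) → F := fun p =>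
    mu (monomial (ind p.1.2) 1 * NWLB.D (R.toList.map fun i => (i, ev p.1.1 i)) (NW F d))
  have hκmem : ∀ p : κ, Disjoint p.1.2 (S p.1.1) ∧ p.1.2.card = l ∧
      ∀ a', a' ≠ p.1.1 → ¬ S a' ⊆ p.1.2 ∪ S p.1.1 := by
    intro p
    have hp := (Finset.mem_sigma.mp p.2).2
    simp only [hGd, Finset.mem_filter, Finset.mem_powersetCard] at hp
    exact ⟨Finset.subset_compl_iff_disjoint_right.mp hp.1.1, hp.1.2, hp.2⟩
  have hlin : LinearIndependent F x := by
    refine linInd_tri x (fun p => p.1.2 ∪ S p.1.1) wt ?_ hwt ?_ ?_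
    · intro p p' h
      simp only at h
      have h1 : p.1.1 = p'.1.1 := by
        by_contra hne
        exact (hκmem p').2.2 _ hne (h ▸ Finset.subset_union_right)
      have h2 : p.1.2 = p'.1.2 := by
        rw [← Finset.union_sdiff_cancel_right (hκmem p).1, h, h1,
          Finset.union_sdiff_cancel_right (hκmem p').1]
      exact Subtype.ext (Sigma.ext h1 (heq_of_eq h2))
    · intro p
      simp only [x]
      rw [mu_D_NW, Finset.sum_eq_single (f p.1.1)]
      · rw [if_pos ⟨hf1 _, ind_add (hκmem p).1⟩]
        exact one_ne_zero
      · intro c _ hc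
        rw [if_neg]
        rintro ⟨_, h2⟩
        obtain ⟨h3, h4⟩ := ind_add_eq h2
        refine hc (Sg_inj R (by omega) c _ ?_)
        rw [← Finset.union_sdiff_cancel_left h3, h4, Finset.union_sdiff_cancel_left (hκmem p).1]
      · intro h; exact absurd (Finset.mem_univ _) h
    · intro p U hU
      simp only [x]
      rw [mu_D_NW]
      refine Finset.sum_eq_zero fun c _ => ?_
      rw [if_neg]
      rintro ⟨h1, h2⟩
      obtain ⟨h3, h4⟩ := ind_add_eq h2
      have := hf2 p.1.1 c h1
      rw [hadd _ _ (hκmem p).1, ← h4, hadd _ _ h3] at hU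
      simp only [hS] at hU
      omega
  -- the generators
  let J : (i : Fin T) → Finset (Fin (dd i)) := fun i => Finset.univ.filter (fun j => deg i j ≠ 0)
  let layers : Finset (Finset (F × F)) :=
    Finset.univ.filter (fun m => l ≤ m.card ∧ m.card ≤ l + r * s)
  let gens : Finset (Finset (F × F) → F) := Finset.univ.biUnion fun i =>
    ((J i).powerset ×ˢ layers).image
      (fun q => mu (monomial (ind q.2) 1 * ∏ j ∈ J i \ q.1, Q i j))
  have hspan : Set.range x ≤ Submodule.span F (gens : Set (Finset (F × F) → F)) := by
    rintro _ ⟨p, rfl⟩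
    simp only [x]
    rw [hNW, map_sum, Finset.mul_sum, map_sum]
    refine Submodule.sum_mem _ fun i _ => ?_
    obtain ⟨c, hc⟩ := const_split (Q i) (deg i) (hhom i)
    rw [hc, map_smul, mul_smul_comm, map_smul]
    refine Submodule.smul_mem _ _ ?_
    have h1 := D_prod_mem (Q i) (J i) s (fun j _ => hs i j) (R.toList.map fun t => (t, ev p.1.1 t))
    have h2 := mu_shift_mem (Q i) (J i) s _ l p.1.2 (hκmem p).2.1 _ h1
    refine Submodule.span_mono ?_ h2
    rintro y ⟨A, hA, m', hm1, hm2, rfl⟩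
    simp only [List.length_map, Finset.length_toList, hR] at hm2
    simp only [gens, Finset.mem_coe, Finset.mem_biUnion, Finset.mem_univ, true_and,
      Finset.mem_image, Finset.mem_product, Finset.mem_powerset]
    refine ⟨i, (A, m'), ⟨hA, ?_⟩, rfl⟩
    simp only [layers, Finset.mem_filter, Finset.mem_univ, true_and]
    exact ⟨hm1, hm2⟩
  have hle := linearIndependent_le_span_aux' x hlin (gens : Set (Finset (F × F) → F)) hspan
  rw [Fintype.card_coe] at hle
  have hgc : Fintype.card ↥(gens : Set (Finset (F × F) → F)) = gens.card := by simp
  rw [hgc] at hle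
  have hlay := card_layers (V := F × F) l (r * s) (b + 1) (by rw [hN, hl])
  rw [hN] at hlay
  have hgens : gens.card ≤ T * (2 ^ n * ((r * s + 1) * (2 ^ ((b + 1) * (r * s)) * (n ^ 2).choose l))) := by
    refine Finset.card_biUnion_le.trans ?_
    refine (Finset.sum_le_card_nsmul _ _
      (2 ^ n * ((r * s + 1) * (2 ^ ((b + 1) * (r * s)) * (n ^ 2).choose l)))
      fun i _ => ?_).trans (le_of_eq ?_)
    · refine Finset.card_image_le.trans ?_
      rw [Finset.card_product, Finset.card_powerset]
      exact Nat.mul_le_mul (Nat.pow_le_pow_right (by norm_num) (card_nonconst _ (hdeg i))) hlay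
    · simp
  have hhalf : (n ^ 2).choose l ≤ 2 ^ n * (n ^ 2 - (n - r)).choose l := by
    have h2l : 2 * l ≤ n ^ 2 - (n - r) := by
      have : l * 2 ≤ l * 2 ^ b := Nat.mul_le_mul_left _ (by
        calc 2 = 2 ^ 1 := rfl
          _ ≤ 2 ^ b := Nat.pow_le_pow_right (by norm_num) hb)
      rw [hN] at hX; omega
    have := choose_halve l (n ^ 2 - (n - r)) h2l (n - r)
    rw [Nat.sub_add_cancel (by omega)] at this
    exact this.trans (Nat.mul_le_mul_right _ (Nat.pow_le_pow_right (by norm_num) (by omega)))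
  have hpos : 0 < (n ^ 2 - (n - r)).choose l := by
    refine Nat.choose_pos ?_
    have : l * 1 ≤ l * 2 ^ b := Nat.mul_le_mul_left _ Nat.one_le_two_pow
    rw [hN] at hX; omega
  refine Nat.le_of_mul_le_mul_right (c := (n ^ 2 - (n - r)).choose l) ?_ hpos
  calc n ^ r * (n ^ 2 - (n - r)).choose l ≤ 2 * κ.card := hκ
    _ ≤ 2 * (T * (2 ^ n * ((r * s + 1) * (2 ^ ((b + 1) * (r * s)) * (2 ^ n * (n ^ 2 - (n - r)).choose l))))) := by
        refine Nat.mul_le_mul_left _ (hle.trans (hgens.trans ?_))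
        gcongr
    _ = _ := by ring
end Core
end NWLB

theorem stmt1 (δ : ℝ) (hδ0 : 0 < δ) (hδ1 : δ < 1) :
    ∃ β : ℝ, 0 < β ∧ ∃ c : ℝ, 0 < c ∧ ∃ n₀ : ℕ, ∀ k : ℕ, n₀ ≤ 2 ^ k →
      ∀ (F : Type) [Field F] [Fintype F], Fintype.card F = 2 ^ k →
      ∀ (T : ℕ) (dd : Fin T → ℕ)
        (Q : (i : Fin T) → Fin (dd i) → MvPolynomial (F × F) F)
        (deg : (i : Fin T) → Fin (dd i) → ℕ),
        (∀ i j, (Q i j).IsHomogeneous (deg i j)) →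
        (∀ i, ∑ j, deg i j = 2 ^ k) →
        (∀ i j, ∀ u ∈ (Q i j).support,
          (u.support.card : ℝ) ≤ β * Real.log ((2 : ℝ) ^ k)) →
        NW F ⌊δ * (2 ^ k : ℝ)⌋₊ = ∑ i, ∏ j, Q i j →
        (2 : ℝ) ^ (c * (2 : ℝ) ^ k) ≤ (T : ℝ) := by
  have hε : 0 < 1 - δ := by linarith
  obtain ⟨b, hb⟩ := exists_nat_ge (14 / (1 - δ))
  obtain ⟨K1, hK1⟩ := exists_nat_ge (12 / (1 - δ))
  obtain ⟨K2, hK2⟩ := exists_nat_ge (12 / δ)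
  have hb' : 14 ≤ (b : ℝ) * (1 - δ) := (div_le_iff₀ hε).mp hb
  have hb1 : 1 ≤ b := by
    rcases Nat.eq_zero_or_pos b with h | h
    · rw [h] at hb'; norm_num at hb'
    · exact h
  refine ⟨1 / (6 * (b + 1)), by positivity, 1, one_pos, 2 ^ (K1 + K2 + b + 1), ?_⟩
  intro k hk F _ _ hF T dd Q deg hhom hdeg hs hNW
  have hkK : K1 + K2 + b + 1 ≤ k := (Nat.pow_le_pow_iff_right (by norm_num)).mp hk
  set n : ℕ := 2 ^ k with hn
  have hnR : ((2 : ℝ) ^ k) = (n : ℝ) := by rw [hn]; push_cast; rfl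
  rw [hnR] at hNW
  have hkR : ((K1 : ℝ) + K2 + b + 1) ≤ k := by exact_mod_cast hkK
  have hkpos : (0 : ℝ) < k := by
    have : (0:ℝ) ≤ K1 + K2 + b := by positivity
    linarith
  have hkn : k < n := Nat.lt_two_pow_self
  have hnpos : (0 : ℝ) < n := by exact_mod_cast (lt_of_le_of_lt (Nat.zero_le _) hkn)
  have hk1 : 12 ≤ (k : ℝ) * (1 - δ) := by
    refine (div_le_iff₀ hε).mp (hK1.trans ?_)
    have : (0:ℝ) ≤ K2 + b := by positivity
    linarith
  have hk2 : 12 ≤ (k : ℝ) * δ := by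
    refine (div_le_iff₀ hδ0).mp (hK2.trans ?_)
    have : (0:ℝ) ≤ K1 + b := by positivity
    linarith
  set d := ⌊δ * (n : ℝ)⌋₊ with hd
  set r := 6 * n / k with hr
  have hkr : k * r ≤ 6 * n := Nat.mul_div_le _ _
  have hkr' : 6 * n < k * r + k := by
    have := Nat.lt_mul_div_succ (6 * n) (b := k) (by omega)
    rw [← hr] at this
    linarith
  have hkrR : (k : ℝ) * r ≤ 6 * n := by exact_mod_cast hkr
  have hdle : (d : ℝ) ≤ δ * n := Nat.floor_le (by positivity)
  have hr1 : (r : ℝ) ≤ (1 - δ) * n / 2 := by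
    have h1 : (k : ℝ) * r ≤ k * ((1 - δ) * n / 2) := by nlinarith
    exact le_of_mul_le_mul_left h1 hkpos
  have hr2 : (r : ℝ) ≤ δ * n := by
    have h1 : (k : ℝ) * r ≤ k * (δ * n) := by nlinarith
    exact le_of_mul_le_mul_left h1 hkpos
  have hrd : r ≤ d := Nat.le_floor hr2
  have hrdn : r + d ≤ n := by
    have : (r : ℝ) + d ≤ n := by nlinarith
    exact_mod_cast this
  obtain ⟨D, hD⟩ := Nat.exists_eq_add_of_le hrdn
  have hDR : (n : ℝ) = r + d + D := by exact_mod_cast hD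
  have hDge : (1 - δ) * n / 2 ≤ (D : ℝ) := by nlinarith
  have hbD : k * r + 1 ≤ b * D := by
    have h7 : 7 * (n : ℝ) ≤ b * D := by
      have : (b : ℝ) * ((1 - δ) * n / 2) ≤ b * D := mul_le_mul_of_nonneg_left hDge (by positivity)
      nlinarith
    have h7' : 7 * n ≤ b * D := by exact_mod_cast h7
    omega
  set s := ⌊(1 / (6 * ((b : ℝ) + 1))) * Real.log ((2 : ℝ) ^ k)⌋₊ with hsdef
  have hlog : Real.log ((2 : ℝ) ^ k) ≤ k := by
    rw [Real.log_pow]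
    have := Real.log_two_lt_d9
    nlinarith
  have hlog0 : 0 ≤ Real.log ((2 : ℝ) ^ k) := Real.log_nonneg (one_le_pow₀ (by norm_num))
  have hsle : 6 * ((b : ℝ) + 1) * s ≤ k := by
    have h1 : (s : ℝ) ≤ (1 / (6 * ((b : ℝ) + 1))) * Real.log ((2 : ℝ) ^ k) :=
      Nat.floor_le (by positivity)
    calc 6 * ((b : ℝ) + 1) * s
        ≤ 6 * ((b : ℝ) + 1) * ((1 / (6 * ((b : ℝ) + 1))) * Real.log ((2 : ℝ) ^ k)) := by gcongr
      _ = Real.log ((2 : ℝ) ^ k) := by field_simp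
      _ ≤ k := hlog
  have hsle' : 6 * (b + 1) * s ≤ k := by exact_mod_cast hsle
  have hbrs : (b + 1) * (r * s) ≤ n := by
    have h1 : 6 * (b + 1) * s * r ≤ k * r := Nat.mul_le_mul_right _ hsle'
    have h2 : 6 * ((b + 1) * (r * s)) ≤ 6 * n := by
      calc 6 * ((b + 1) * (r * s)) = 6 * (b + 1) * s * r := by ring
        _ ≤ _ := h1.trans hkr
    omega
  have hrs : r * s ≤ n := le_trans (Nat.le_mul_of_pos_left _ (by omega)) hbrs
  have hcore := NWLB.core (F := F) n d r s b (2 ^ (2 * k - (b + 1))) D hF hrd (by omega)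
    (by rw [sq]; exact Nat.mul_le_mul_right _ (by omega))
    (by rw [← pow_add, hn, ← pow_mul]; congr 1; omega) hb1
    (by rw [hn, ← pow_mul, ← pow_succ]; exact Nat.pow_le_pow_right (by norm_num) hbD)
    T dd Q deg hhom hdeg (fun i j u hu => Nat.le_floor (hs i j u hu)) hNW
  have h5 : 2 ^ n * 2 ^ (4 * n + 1) ≤ T * 2 ^ (4 * n + 1) := by
    calc 2 ^ n * 2 ^ (4 * n + 1) = 2 ^ (n + (4 * n + 1)) := (pow_add _ _ _).symm
      _ ≤ 2 ^ (k * r) := Nat.pow_le_pow_right (by norm_num) (by omega)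
      _ = n ^ r := by rw [hn, ← pow_mul]
      _ ≤ _ := hcore
      _ ≤ T * (2 * 2 ^ n * 2 ^ n * 2 ^ n * 2 ^ n) := by
          have h6 : r * s + 1 ≤ 2 ^ n := by
            have : n < 2 ^ n := Nat.lt_two_pow_self
            omega
          have h7 : 2 ^ ((b + 1) * (r * s)) ≤ 2 ^ n := Nat.pow_le_pow_right (by norm_num) hbrs
          gcongr
      _ = T * 2 ^ (4 * n + 1) := by ring
  have h6 : 2 ^ n ≤ T := Nat.le_of_mul_le_mul_right h5 (by positivity)
  rw [hnR, one_mul, Real.rpow_natCast]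
  exact_mod_cast h6
end
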